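/- arXiv:1911.06924 — 2 statements merged into one kernel-verified Lean document; each statement's English description precedes it below -/
import Mathlib

section
/- There is a universal constant c > 0 such that the following holds for every integer n ≥ 2, every ε > 0, and every f : {0,1}^n → {0,1}. If dist(f, Mono) ≥ ε and the number of decreasing edges of f is less than ε·√n·2^n, then there exists h ∈ {0, 1, ..., ⌊log₂ n⌋} such that, setting d = 2^h, the expectation over S ~ S(1/d) of the probability over a uniformly random x ∈ {0,1}^n that Capture(x, S, f) = 1 is at least c·ε/(√n·(log₂ n)^4). -/
open Finset

attribute [local instance] Classical.propDecidable

variable {n : ℕ}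

/-- The edge of the hypercube along dimension `i` at `x` (the pair
`{x^{(i→0)}, x^{(i→1)}}`) is decreasing for `f`. -/
def decEdge (f : (Fin n → Bool) → Bool) (x : Fin n → Bool) (i : Fin n) : Prop :=
  f (Function.update x i false) = true ∧ f (Function.update x i true) = false

/-- `x` with its `i`-th coordinate flipped. -/
def flipC (x : Fin n → Bool) (i : Fin n) : Fin n → Bool := Function.update x i (!(x i))

/-- `g` is monotone. -/
def monoB (g : (Fin n → Bool) → Bool) : Prop :=
  ∀ x y : Fin n → Bool, (∀ i, x i ≤ y i) → g x ≤ g y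

/-- Distance of `f` to the set of monotone functions. -/
noncomputable def distMono (f : (Fin n → Bool) → Bool) : ℝ :=
  sInf {d : ℝ | ∃ g : (Fin n → Bool) → Bool, monoB g ∧
    d = ((univ.filter fun x => f x ≠ g x).card : ℝ) / 2 ^ n}

/-- `I_f⁻(x)`: the number of decreasing edges of `f` incident on `x`. -/
noncomputable def Iminus (f : (Fin n → Bool) → Bool) (x : Fin n → Bool) : ℕ :=
  (univ.filter fun i => decEdge f x i).card

/-- The number of decreasing edges of `f` (each edge represented by its lower
endpoint together with its dimension). -/
noncomputable def numDecEdges (f : (Fin n → Bool) → Bool) : ℕ :=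
  (univ.filter fun q : (Fin n → Bool) × Fin n => q.1 q.2 = false ∧ decEdge f q.1 q.2).card

/-- The event Capture(x, S, f). -/
def Capture (f : (Fin n → Bool) → Bool) (S : Finset (Fin n)) (x : Fin n → Bool) : Prop :=
  ∃ i ∈ S, decEdge f x i ∧ ∀ j ∈ S \ {i}, ¬ decEdge f (flipC x i) j

/-- Hamming weight of `x` restricted to the coordinates in `M`. -/
noncomputable def wt (M : Finset (Fin n)) (x : Fin n → Bool) : ℕ :=
  (M.filter fun i => x i = true).card

/-- `g` is unate. -/
def unate (g : (Fin n → Bool) → Bool) : Prop :=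
  ∃ σ : Fin n → Bool, monoB (fun x => g (fun i => xor (x i) (σ i)))

/-- Distance of `f` to the set of unate functions. -/
noncomputable def distUnate (f : (Fin n → Bool) → Bool) : ℝ :=
  sInf {d : ℝ | ∃ g : (Fin n → Bool) → Bool, unate g ∧
    d = ((univ.filter fun x => f x ≠ g x).card : ℝ) / 2 ^ n}

/-- `g` is a `k`-junta. -/
def isJunta (k : ℕ) (g : (Fin n → Bool) → Bool) : Prop :=
  ∃ J : Finset (Fin n), J.card ≤ k ∧
    ∀ x y : Fin n → Bool, (∀ i ∈ J, x i = y i) → g x = g y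

/-- Distance of `f` to the set of `k`-juntas. -/
noncomputable def distJunta (k : ℕ) (f : (Fin n → Bool) → Bool) : ℝ :=
  sInf {d : ℝ | ∃ g : (Fin n → Bool) → Bool, isJunta k g ∧
    d = ((univ.filter fun x => f x ≠ g x).card : ℝ) / 2 ^ n}

/-- `I⁻_{f,red}(x)` for the coloring `col` (an edge is identified by its lower
endpoint along its dimension; `col e i = true` means the edge along dimension `i`
at `e` is red). -/
noncomputable def IredCol (f : (Fin n → Bool) → Bool)
    (col : (Fin n → Bool) → Fin n → Bool) (x : Fin n → Bool) : ℕ :=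
  if f x = true then
    (univ.filter fun i => decEdge f x i ∧ col (Function.update x i false) i = true).card
  else 0

/-- `I⁻_{f,blue}(x)` for the coloring `col`. -/
noncomputable def IblueCol (f : (Fin n → Bool) → Bool)
    (col : (Fin n → Bool) → Fin n → Bool) (x : Fin n → Bool) : ℕ :=
  if f x = false then
    (univ.filter fun i => decEdge f x i ∧ col (Function.update x i false) i = false).card
  else 0

/-- `Ψ_M`: the middle layer of the subcube `{0,1}^M`. -/
noncomputable def PsiSet (M : Finset (Fin n)) : Finset (↥M → Bool) :=
  univ.filter fun z => (univ.filter fun i : ↥M => z i = true).card = n / 4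

/-- `x` is an erased point (for parameter `κ` and control set `M`). -/
def ErasedPt (κ : ℝ) (M : Finset (Fin n)) (x : Fin n → Bool) : Prop :=
  wt M x = n / 4 ∧ |(wt Mᶜ x : ℝ) - (n : ℝ) / 4| ≤ (n : ℝ) ^ κ

/-- `Maj(x_{M̄})`: majority on the coordinates outside `M`. -/
noncomputable def MajBar (M : Finset (Fin n)) (x : Fin n → Bool) : Bool :=
  decide (n / 4 < wt Mᶜ x)

/-- `F` is a completion of the `D⁻` instance determined by `(M, P)`. -/
def DminusCompletion (κ : ℝ) (M : Finset (Fin n)) (P : Finset (↥M → Bool))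
    (F : (Fin n → Bool) → Bool) : Prop :=
  (∀ x, wt M x < n / 4 → F x = false) ∧
  (∀ x, n / 4 < wt M x → F x = true) ∧
  (∀ x, wt M x = n / 4 → ¬ ErasedPt κ M x →
    F x = if (fun i : ↥M => x i.1) ∈ P then MajBar M x else !(MajBar M x))

/-- The function `F` of Statement 12: `F(x) = 1` iff `|x_M| > n/4`, or
`|x_M| = n/4` and `x_M ∉ P`. -/
noncomputable def DplusF (M : Finset (Fin n)) (P : Finset (↥M → Bool))
    (x : Fin n → Bool) : Bool :=
  if n / 4 < wt M x then true
  else if wt M x = n / 4 ∧ (fun i : ↥M => x i.1) ∉ P then true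
  else false

/-!
Sorting a function along a dimension exchanges, on every edge of that dimension, the two values
when they decrease; sorting along all dimensions yields a monotone function. Fix a point `x` and
sort `f` along a random sublist of the dimensions: the value at `x` is a Boolean function of the
bits selecting the sublist. If `M i` is monotone along dimension `i`, sorting `M i` instead of `f`
gives a value that does not depend on bit `i`, so the flip of bit `i` is paid for by
disagreements of `f` with `M i` after sorting. Talagrand's inequality on the cube of sublists then
shows that sorting along a random sublist and along its complement give nearly the same function,
up to the potential `𝔼 x, √#{i | f x ≠ M i x}`, which sorting does not increase. Hence replacing
a list by a random half of it, and rearranging it into two random halves, have nearly the same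
effect on the distance of the sorted function to monotonicity. These two operations commute, so
the comparison can be iterated about `log n` times, when the first produces the empty list and
the second still sorts completely; the distance of `f` is thus `O(log n)` times the potential.

Choose `M i` by resolving each decreasing edge at its endpoint with more decreasing edges. By
Cauchy-Schwarz against the number of decreasing edges, the potential is controlled by the mean of
the fraction of the decreasing edges at `x` that are charged to `x`. A random set of density
`1 / d`, with `d` the largest power of two up to the number of decreasing edges at `x`, captures `x`
with probability at least a constant times this fraction, because a charged dimension is isolated as
soon as the set avoids `O(d)` others. Averaging over the scales `d` picks a good one.
-/

open scoped BigOperators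

lemma eq_update_false_or_eq_update_true (x : Fin n → Bool) (i : Fin n) :
    x = Function.update x i false ∨ x = Function.update x i true := by
  cases h : x i <;> simp [h]

lemma flipC_involutive (i : Fin n) : Function.Involutive fun x : Fin n → Bool => flipC x i :=
  fun x => by simp [flipC]

lemma flipC_cons_zero (b : Bool) (x : Fin n → Bool) :
    flipC (Fin.cons b x : Fin (n + 1) → Bool) 0 = Fin.cons (!b) x := by
  funext k
  cases k using Fin.cases <;> simp [flipC, Fin.succ_ne_zero]

lemma flipC_cons_succ (b : Bool) (x : Fin n → Bool) (i : Fin n) :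
    flipC (Fin.cons b x : Fin (n + 1) → Bool) i.succ = Fin.cons b (flipC x i) := by
  funext k
  cases k using Fin.cases <;>
    simp [flipC, Function.update_apply, (Fin.succ_ne_zero i).symm, Fin.succ_inj]

lemma expect_eq_expect_update (φ : (Fin n → Bool) → ℝ) (i : Fin n) :
    𝔼 x, φ x = 𝔼 x, (φ (Function.update x i false) + φ (Function.update x i true)) / 2 := by
  have hflip : 𝔼 x, φ (flipC x i) = 𝔼 x, φ x :=
    Fintype.expect_equiv (flipC_involutive i).toPerm _ _ fun _ => rfl
  have hpair (x : Fin n → Bool) :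
      φ (Function.update x i false) + φ (Function.update x i true) = φ x + φ (flipC x i) := by
    have hself : Function.update x i (x i) = x := Function.update_eq_self i x
    cases h : x i <;> rw [h] at hself <;> simp only [flipC, h, hself, Bool.not_false, Bool.not_true]
    exact add_comm _ _
  simp only [hpair, ← expect_div, expect_add_distrib, hflip]
  ring

lemma expect_eq_expect_cons (φ : (Fin (n + 1) → Bool) → ℝ) :
    𝔼 x, φ x =
      (𝔼 x : Fin n → Bool, φ (Fin.cons false x) + 𝔼 x : Fin n → Bool, φ (Fin.cons true x)) / 2 := by
  rw [Fintype.expect_equiv (Fin.consEquiv fun _ : Fin (n + 1) => Bool).symm φ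
    (fun q => φ (Fin.cons q.1 q.2)) fun x => by simp [Fin.consEquiv],
    ← univ_product_univ, expect_product, Fintype.expect_eq_sum_div_card]
  simp [add_comm]

/-- The discrete metric on `Bool`, with values in `ℝ` so that it can be averaged. -/
noncomputable def boolDist (a b : Bool) : ℝ := if a = b then 0 else 1

lemma boolDist_self (a : Bool) : boolDist a a = 0 := if_pos rfl

lemma boolDist_nonneg (a b : Bool) : 0 ≤ boolDist a b := by
  unfold boolDist; split_ifs <;> norm_num

lemma boolDist_comm (a b : Bool) : boolDist a b = boolDist b a := by
  simp only [boolDist, eq_comm]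

lemma boolDist_triangle (a b c : Bool) : boolDist a c ≤ boolDist a b + boolDist b c := by
  cases a <;> cases b <;> cases c <;> norm_num [boolDist]

lemma boolDist_sq (a b : Bool) : boolDist a b ^ 2 = boolDist a b := by
  unfold boolDist; split_ifs <;> norm_num

lemma sqrt_boolDist (a b : Bool) : √(boolDist a b) = boolDist a b := by
  unfold boolDist; split_ifs <;> simp

lemma abs_toNat_sub_toNat (a b : Bool) : |(a.toNat : ℝ) - b.toNat| = boolDist a b := by
  cases a <;> cases b <;> norm_num [boolDist]

lemma boolDist_inf_add_boolDist_sup (c a b : Bool) :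
    boolDist c (a ⊓ b) + boolDist c (a ⊔ b) = boolDist c a + boolDist c b := by
  cases a <;> cases b <;> simp [add_comm]

lemma boolDist_false_inf_le (a b : Bool) : boolDist false (a ⊓ b) ≤ boolDist false a := by
  cases a <;> cases b <;> simp [boolDist]

lemma boolDist_true_sup_le (a b : Bool) : boolDist true (a ⊔ b) ≤ boolDist true a := by
  cases a <;> cases b <;> simp [boolDist]

/-- The probability that `g x = true` for a uniformly random point `x` of the cube. -/
noncomputable def trueProb (g : (Fin n → Bool) → Bool) : ℝ := 𝔼 x, ((g x).toNat : ℝ)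

lemma trueProb_nonneg (g : (Fin n → Bool) → Bool) : 0 ≤ trueProb g :=
  expect_nonneg fun _ _ => Nat.cast_nonneg _

lemma trueProb_le_one (g : (Fin n → Bool) → Bool) : trueProb g ≤ 1 :=
  expect_le univ_nonempty fun x _ => mod_cast Bool.toNat_le (g x)

lemma sqrt_sq_expect_add_sq_expect_le {ι : Type*} (s : Finset ι) (p q : ι → ℝ) :
    √((𝔼 x ∈ s, p x) ^ 2 + (𝔼 x ∈ s, q x) ^ 2) ≤ 𝔼 x ∈ s, √(p x ^ 2 + q x ^ 2) := by
  have h := RCLike.norm_expect_le (K := ℂ) (s := s) (f := fun x => (⟨p x, q x⟩ : ℂ))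
  have hre : (𝔼 x ∈ s, (⟨p x, q x⟩ : ℂ)).re = 𝔼 x ∈ s, p x :=
    map_expect (Complex.reLm.restrictScalars ℚ≥0) _ _
  have him : (𝔼 x ∈ s, (⟨p x, q x⟩ : ℂ)).im = 𝔼 x ∈ s, q x :=
    map_expect (Complex.imLm.restrictScalars ℚ≥0) _ _
  simpa only [Complex.norm_eq_sqrt_sq_add_sq, hre, him] using h

lemma add_sq_le_sqrt_sq_add_sq {Q d R A : ℝ} (hQ : 0 ≤ Q) (hQ' : Q ≤ 1 / 4) (hd : |d| ≤ 1 / 2)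
    (hR : Q ≤ R) (hA : |d| ≤ A) : Q + d ^ 2 ≤ √(R ^ 2 + A ^ 2) := by
  apply Real.le_sqrt_of_sq_le
  have hd' : d ^ 2 ≤ 1 / 4 := by rw [← sq_abs]; nlinarith [abs_nonneg d]
  calc (Q + d ^ 2) ^ 2 = Q ^ 2 + d ^ 2 * (2 * Q + d ^ 2) := by ring
    _ ≤ Q ^ 2 + d ^ 2 * 1 := by gcongr; linarith
    _ = Q ^ 2 + |d| ^ 2 := by rw [sq_abs, mul_one]
    _ ≤ R ^ 2 + A ^ 2 := by gcongr

lemma abs_trueProb_cons_sub_le {g : (Fin (n + 1) → Bool) → Bool}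
    {a : (Fin (n + 1) → Bool) → ℝ}
    (h : ∀ x, boolDist (g x) (g (flipC x 0)) ≤ a x + a (flipC x 0)) :
    |(trueProb fun x => g (Fin.cons false x)) - trueProb fun x => g (Fin.cons true x)| / 2 ≤
      𝔼 x, a x := by
  rw [expect_eq_expect_cons, ← expect_add_distrib, trueProb, trueProb, ← expect_sub_distrib]
  gcongr
  refine (abs_expect_le _ _).trans (expect_le_expect fun x _ => ?_)
  rw [abs_toNat_sub_toNat]
  simpa only [flipC_cons_zero, Bool.not_false] using h (Fin.cons false x)

/-- Robust Talagrand inequality: the two endpoints of each sensitive edge of `g` share the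
charge of the edge in an arbitrary way, recorded by `a`. -/
theorem trueProb_mul_one_sub_le_expect_sqrt (g : (Fin n → Bool) → Bool)
    (a : (Fin n → Bool) → Fin n → ℝ)
    (h : ∀ x i, boolDist (g x) (g (flipC x i)) ≤ a x i + a (flipC x i) i) :
    trueProb g * (1 - trueProb g) ≤ 𝔼 x, √(∑ i, a x i ^ 2) := by
  induction n with
  | zero =>
    have hb (b : Bool) : (b.toNat : ℝ) * (1 - b.toNat) = 0 := by cases b <;> simp
    simp [trueProb, hb]
  | succ n ih =>
    have hface (b : Bool) := ih (fun x => g (Fin.cons b x)) (fun x i => a (Fin.cons b x) i.succ)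
      fun x i => by simpa only [flipC_cons_succ] using h (Fin.cons b x) i.succ
    have hA := abs_trueProb_cons_sub_le (a := fun x => a x 0) fun x => h x 0
    have hmean : trueProb g = ((trueProb fun x => g (Fin.cons false x)) +
        trueProb fun x => g (Fin.cons true x)) / 2 := expect_eq_expect_cons _
    have hnonneg (b : Bool) := trueProb_nonneg fun x => g (Fin.cons b x)
    have hle_one (b : Bool) := trueProb_le_one fun x => g (Fin.cons b x)
    have hR := expect_eq_expect_cons fun x => √(∑ i : Fin n, a x i.succ ^ 2)
    set p := fun b => trueProb fun x => g (Fin.cons b x)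
    calc trueProb g * (1 - trueProb g)
        = (p false * (1 - p false) + p true * (1 - p true)) / 2 +
            ((p false - p true) / 2) ^ 2 := by rw [hmean]; ring
      _ ≤ √((𝔼 x, √(∑ i : Fin n, a x i.succ ^ 2)) ^ 2 + (𝔼 x, a x 0) ^ 2) := by
        apply add_sq_le_sqrt_sq_add_sq
        · nlinarith [hnonneg false, hnonneg true, hle_one false, hle_one true]
        · nlinarith [sq_nonneg (p false - 1 / 2), sq_nonneg (p true - 1 / 2)]
        · rw [abs_le]
          constructor <;> linarith [hnonneg false, hnonneg true, hle_one false, hle_one true]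
        · rw [hR]
          linarith [hface false, hface true]
        · rwa [abs_div, abs_two]
      _ ≤ 𝔼 x, √(√(∑ i : Fin n, a x i.succ ^ 2) ^ 2 + a x 0 ^ 2) :=
        sqrt_sq_expect_add_sq_expect_le _ _ _
      _ = 𝔼 x, √(∑ i, a x i ^ 2) := by
        refine expect_congr rfl fun x _ => ?_
        rw [Real.sq_sqrt (by positivity), Fin.sum_univ_succ, add_comm]

lemma expect_boolDist_compl_le (g : (Fin n → Bool) → Bool) :
    𝔼 x, boolDist (g x) (g xᶜ) ≤ 4 * (trueProb g * (1 - trueProb g)) := by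
  have hcompl : 𝔼 x, ((g xᶜ).toNat : ℝ) = trueProb g :=
    Fintype.expect_equiv compl_involutive.toPerm _ _ fun _ => rfl
  have hle : 𝔼 x, boolDist (g x) (g xᶜ) ≤ 2 * trueProb g := by
    rw [two_mul]
    nth_rw 2 [← hcompl]
    rw [trueProb, ← expect_add_distrib]
    refine expect_le_expect fun x _ => ?_
    cases g x <;> cases g xᶜ <;> norm_num [boolDist]
  have hle' : 𝔼 x, boolDist (g x) (g xᶜ) ≤ 2 * (1 - trueProb g) := by
    have hsum : 2 * (1 - trueProb g) =
        𝔼 x, ((1 - ((g x).toNat : ℝ)) + (1 - ((g xᶜ).toNat : ℝ))) := by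
      rw [expect_add_distrib, expect_sub_distrib, expect_sub_distrib, hcompl,
        Fintype.expect_const, trueProb, two_mul]
    rw [hsum]
    refine expect_le_expect fun x _ => ?_
    cases g x <;> cases g xᶜ <;> norm_num [boolDist]
  have hnonneg := trueProb_nonneg g
  have hle_one := trueProb_le_one g
  rcases le_total (trueProb g) (1 / 2) with hhalf | hhalf <;> nlinarith [hhalf]

section Sorting

variable {α : Type*}

/-- `F` does not decrease along the edges of the cube in dimension `i`. -/
def MonoAlong [Preorder α] (i : Fin n) (F : (Fin n → Bool) → α) : Prop :=
  ∀ x, F (Function.update x i false) ≤ F (Function.update x i true)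

lemma monotone_of_forall_monoAlong [Preorder α] {F : (Fin n → Bool) → α}
    (h : ∀ i, MonoAlong i F) : Monotone F := by
  intro x y hxy
  suffices hs : ∀ s : Finset (Fin n), F x ≤ F (s.piecewise y x) by
    simpa only [piecewise_univ] using hs univ
  intro s
  induction s using Finset.induction_on with
  | empty => simp
  | insert i s hi ih =>
    refine ih.trans ?_
    rw [piecewise_insert]
    have hz : s.piecewise y x = Function.update (s.piecewise y x) i (x i) := by
      rw [← piecewise_eq_of_notMem s y x hi, Function.update_eq_self]
    conv_lhs => rw [hz]
    have hxyi : x i ≤ y i := hxy i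
    cases hx : x i <;> cases hy : y i <;> rw [hx, hy] at hxyi
    · exact h i _
    · exact absurd hxyi (by decide)

variable [Lattice α]

/-- Sorting of `F` along dimension `i`: the values at the two endpoints of each edge in that
dimension are replaced by their infimum and supremum, in this order. -/
def sortAlong (i : Fin n) (F : (Fin n → Bool) → α) (x : Fin n → Bool) : α :=
  if x i then F (Function.update x i false) ⊔ F (Function.update x i true)
  else F (Function.update x i false) ⊓ F (Function.update x i true)

/-- Sorting successively along the dimensions in `L`, the head of `L` first. -/
def sortList (L : List (Fin n)) (F : (Fin n → Bool) → α) : (Fin n → Bool) → α :=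
  L.foldl (fun G i => sortAlong i G) F

lemma sortAlong_update_false (i : Fin n) (F : (Fin n → Bool) → α) (x : Fin n → Bool) :
    sortAlong i F (Function.update x i false) =
      F (Function.update x i false) ⊓ F (Function.update x i true) := by
  simp [sortAlong]

lemma sortAlong_update_true (i : Fin n) (F : (Fin n → Bool) → α) (x : Fin n → Bool) :
    sortAlong i F (Function.update x i true) =
      F (Function.update x i false) ⊔ F (Function.update x i true) := by
  simp [sortAlong]

lemma monoAlong_sortAlong_self (i : Fin n) (F : (Fin n → Bool) → α) :
    MonoAlong i (sortAlong i F) := fun x => by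
  simpa only [sortAlong_update_false, sortAlong_update_true] using inf_le_sup

lemma sortAlong_eq_self {i : Fin n} {F : (Fin n → Bool) → α} (h : MonoAlong i F) :
    sortAlong i F = F := by
  funext x
  rcases eq_update_false_or_eq_update_true x i with hx | hx <;> rw [hx]
  · rw [sortAlong_update_false, inf_eq_left.2 (h x)]
  · rw [sortAlong_update_true, sup_eq_right.2 (h x)]

lemma monoAlong_sortAlong {i : Fin n} {F : (Fin n → Bool) → α} (h : MonoAlong i F) (j : Fin n) :
    MonoAlong i (sortAlong j F) := by
  obtain rfl | hij := eq_or_ne i j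
  · exact monoAlong_sortAlong_self i F
  have h' (b : Bool) (x : Fin n → Bool) :
      F (Function.update (Function.update x i false) j b) ≤
        F (Function.update (Function.update x i true) j b) := by
    simpa only [Function.update_comm hij] using h (Function.update x j b)
  intro x
  have hj (b : Bool) : Function.update x i b j = x j := Function.update_of_ne hij.symm _ _
  unfold sortAlong
  simp only [hj]
  split_ifs
  · exact sup_le_sup (h' false x) (h' true x)
  · exact inf_le_inf (h' false x) (h' true x)

lemma sortList_cons (i : Fin n) (L : List (Fin n)) (F : (Fin n → Bool) → α) :
    sortList (i :: L) F = sortList L (sortAlong i F) := rfl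

lemma sortList_append (L L' : List (Fin n)) (F : (Fin n → Bool) → α) :
    sortList (L ++ L') F = sortList L' (sortList L F) :=
  List.foldl_append

lemma monoAlong_sortList {i : Fin n} {F : (Fin n → Bool) → α} (h : MonoAlong i F)
    (L : List (Fin n)) : MonoAlong i (sortList L F) := by
  induction L generalizing F with
  | nil => exact h
  | cons j _ ih => exact ih (monoAlong_sortAlong h j)

lemma monoAlong_sortList_of_mem {i : Fin n} {L : List (Fin n)} (hi : i ∈ L)
    (F : (Fin n → Bool) → α) : MonoAlong i (sortList L F) := by
  induction L generalizing F with
  | nil => cases hi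
  | cons j L ih =>
    rcases List.mem_cons.1 hi with rfl | hi
    · exact monoAlong_sortList (monoAlong_sortAlong_self i F) L
    · exact ih hi _

lemma sortList_eq_self {L : List (Fin n)} {F : (Fin n → Bool) → α}
    (h : ∀ i ∈ L, MonoAlong i F) : sortList L F = F := by
  induction L with
  | nil => rfl
  | cons j L ih =>
    rw [sortList_cons, sortAlong_eq_self (h j List.mem_cons_self)]
    exact ih fun i hi => h i (List.mem_cons_of_mem j hi)

lemma sortList_sortList_self (L : List (Fin n)) (F : (Fin n → Bool) → α) :
    sortList L (sortList L F) = sortList L F :=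
  sortList_eq_self fun _ hi => monoAlong_sortList_of_mem hi F

lemma sortList_filter_flipC {i : Fin n} {F : (Fin n → Bool) → α} (h : MonoAlong i F)
    (L : List (Fin n)) (b : Fin n → Bool) :
    sortList (L.filter (flipC b i)) F = sortList (L.filter b) F := by
  induction L generalizing F with
  | nil => rfl
  | cons j L ih =>
    obtain rfl | hij := eq_or_ne j i
    · cases hb : b j <;>
        simpa [List.filter_cons, flipC, hb, sortList_cons, sortAlong_eq_self h] using ih h
    · have hj : flipC b i j = b j := Function.update_of_ne hij _ _
      cases hb : b j
      · simpa [List.filter_cons, hj, hb] using ih h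
      · simpa [List.filter_cons, hj, hb, sortList_cons] using ih (monoAlong_sortAlong h j)

end Sorting

section Potential

variable {ι : Type*} [Fintype ι]

lemma sqrt_add_sqrt_le_of_add_eq {p q r s : ℝ} (hq : 0 ≤ q) (hqr : q ≤ r) (hqs : q ≤ s)
    (h : q + p = r + s) : √q + √p ≤ √r + √s := by
  have hprod : √q * √p ≤ √r * √s := by
    rw [← Real.sqrt_mul hq, ← Real.sqrt_mul (hq.trans hqr)]
    apply Real.sqrt_le_sqrt
    nlinarith [mul_nonneg (sub_nonneg.2 hqr) (sub_nonneg.2 hqs)]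
  refine (pow_le_pow_iff_left₀ (by positivity) (by positivity) two_ne_zero).1 ?_
  rw [add_sq, add_sq, Real.sq_sqrt hq, Real.sq_sqrt (by linarith), Real.sq_sqrt (hq.trans hqr),
    Real.sq_sqrt (hq.trans hqs)]
  linarith

lemma sqrt_sum_boolDist_inf_add_sqrt_sum_boolDist_sup_le (u₀ u₁ : Bool) (v₀ v₁ : ι → Bool) :
    √(∑ i, boolDist (u₀ ⊓ u₁) (v₀ i ⊓ v₁ i)) + √(∑ i, boolDist (u₀ ⊔ u₁) (v₀ i ⊔ v₁ i)) ≤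
      √(∑ i, boolDist u₀ (v₀ i)) + √(∑ i, boolDist u₁ (v₁ i)) := by
  have hnonneg (c : Bool) (v : ι → Bool) : 0 ≤ ∑ i, boolDist c (v i) :=
    sum_nonneg fun _ _ => boolDist_nonneg _ _
  have hsum (c : Bool) : ∑ i, boolDist c (v₀ i ⊓ v₁ i) + ∑ i, boolDist c (v₀ i ⊔ v₁ i) =
      ∑ i, boolDist c (v₀ i) + ∑ i, boolDist c (v₁ i) := by
    simp only [← sum_add_distrib, boolDist_inf_add_boolDist_sup]
  have hinf₀ : ∑ i, boolDist false (v₀ i ⊓ v₁ i) ≤ ∑ i, boolDist false (v₀ i) :=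
    sum_le_sum fun _ _ => boolDist_false_inf_le _ _
  have hinf₁ : ∑ i, boolDist false (v₀ i ⊓ v₁ i) ≤ ∑ i, boolDist false (v₁ i) :=
    sum_le_sum fun i _ => inf_comm (v₀ i) (v₁ i) ▸ boolDist_false_inf_le _ _
  have hsup₀ : ∑ i, boolDist true (v₀ i ⊔ v₁ i) ≤ ∑ i, boolDist true (v₀ i) :=
    sum_le_sum fun _ _ => boolDist_true_sup_le _ _
  have hsup₁ : ∑ i, boolDist true (v₀ i ⊔ v₁ i) ≤ ∑ i, boolDist true (v₁ i) :=
    sum_le_sum fun i _ => sup_comm (v₀ i) (v₁ i) ▸ boolDist_true_sup_le _ _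
  cases u₀ <;> cases u₁
  · exact sqrt_add_sqrt_le_of_add_eq (hnonneg _ _) hinf₀ hinf₁ (hsum false)
  · exact add_le_add (Real.sqrt_le_sqrt hinf₀) (Real.sqrt_le_sqrt hsup₁)
  · rw [add_comm (√(∑ i, boolDist true (v₀ i)))]
    exact add_le_add (Real.sqrt_le_sqrt hinf₁) (Real.sqrt_le_sqrt hsup₀)
  · rw [add_comm]
    exact sqrt_add_sqrt_le_of_add_eq (hnonneg _ _) hsup₀ hsup₁ (by rw [add_comm, ← hsum true]; rfl)

/-- The mean square root of the number of members of the family `M` that disagree with `F`: the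
potential which sorting does not increase. -/
noncomputable def sqrtDisagreement (F : (Fin n → Bool) → Bool) (M : ι → (Fin n → Bool) → Bool) :
    ℝ :=
  𝔼 x, √(∑ i, boolDist (F x) (M i x))

lemma sqrtDisagreement_sortAlong_le (j : Fin n) (F : (Fin n → Bool) → Bool)
    (M : ι → (Fin n → Bool) → Bool) :
    sqrtDisagreement (sortAlong j F) (fun i => sortAlong j (M i)) ≤ sqrtDisagreement F M := by
  unfold sqrtDisagreement
  rw [expect_eq_expect_update _ j, expect_eq_expect_update (fun x => √(∑ i, boolDist (F x) _)) j]
  refine expect_le_expect fun x _ => ?_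
  simp only [sortAlong_update_false, sortAlong_update_true]
  gcongr ?_ / 2
  exact sqrt_sum_boolDist_inf_add_sqrt_sum_boolDist_sup_le _ _ _ _

lemma sqrtDisagreement_sortList_le (L : List (Fin n)) (F : (Fin n → Bool) → Bool)
    (M : ι → (Fin n → Bool) → Bool) :
    sqrtDisagreement (sortList L F) (fun i => sortList L (M i)) ≤ sqrtDisagreement F M := by
  induction L generalizing F M with
  | nil => exact le_rfl
  | cons j L ih =>
    exact (ih (sortAlong j F) fun i => sortAlong j (M i)).trans
      (sqrtDisagreement_sortAlong_le j F M)

end Potential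

section Distance

/-- The normalized Hamming distance: the fraction of points at which `F` and `G` differ. -/
noncomputable def relDist (F G : (Fin n → Bool) → Bool) : ℝ := 𝔼 x, boolDist (F x) (G x)

lemma relDist_eq_card_div (F G : (Fin n → Bool) → Bool) :
    relDist F G = ((univ.filter fun x => F x ≠ G x).card : ℝ) / 2 ^ n := by
  simp [relDist, Fintype.expect_eq_sum_div_card, boolDist, card_filter]

lemma relDist_nonneg (F G : (Fin n → Bool) → Bool) : 0 ≤ relDist F G :=
  expect_nonneg fun _ _ => boolDist_nonneg _ _

lemma relDist_self (F : (Fin n → Bool) → Bool) : relDist F F = 0 := by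
  simp [relDist, boolDist_self]

lemma relDist_comm (F G : (Fin n → Bool) → Bool) : relDist F G = relDist G F :=
  expect_congr rfl fun _ _ => boolDist_comm _ _

lemma relDist_triangle (F G H : (Fin n → Bool) → Bool) :
    relDist F H ≤ relDist F G + relDist G H := by
  rw [relDist, relDist, relDist, ← expect_add_distrib]
  exact expect_le_expect fun _ _ => boolDist_triangle _ _ _

lemma relDist_sortList_le (L : List (Fin n)) (F G : (Fin n → Bool) → Bool) :
    relDist (sortList L F) (sortList L G) ≤ relDist F G := by
  simpa [relDist, sqrtDisagreement, sqrt_boolDist] using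
    sqrtDisagreement_sortList_le (ι := Unit) L F fun _ => G

lemma distMono_eq_sInf_relDist (F : (Fin n → Bool) → Bool) :
    distMono F = sInf (relDist F '' {G | monoB G}) := by
  simp only [distMono, ← relDist_eq_card_div]
  congr 1
  ext d
  simp [eq_comm]

lemma distMono_le_relDist {F G : (Fin n → Bool) → Bool} (hG : monoB G) :
    distMono F ≤ relDist F G := by
  rw [distMono_eq_sInf_relDist]
  exact csInf_le (Set.toFinite _).bddBelow (Set.mem_image_of_mem _ hG)

lemma exists_monoB_relDist_eq_distMono (F : (Fin n → Bool) → Bool) :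
    ∃ G, monoB G ∧ relDist F G = distMono F := by
  rw [distMono_eq_sInf_relDist]
  have hne : {G : (Fin n → Bool) → Bool | monoB G}.Nonempty := ⟨fun _ => false, fun _ _ _ => le_rfl⟩
  exact (hne.image (relDist F)).csInf_mem (Set.toFinite _)

lemma distMono_nonneg (F : (Fin n → Bool) → Bool) : 0 ≤ distMono F := by
  obtain ⟨G, -, hG⟩ := exists_monoB_relDist_eq_distMono F
  exact hG ▸ relDist_nonneg F G

lemma distMono_le_distMono_add (F G : (Fin n → Bool) → Bool) :
    distMono F ≤ distMono G + relDist F G := by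
  obtain ⟨H, hH, hGH⟩ := exists_monoB_relDist_eq_distMono G
  linarith [distMono_le_relDist (F := F) hH, relDist_triangle F G H]

lemma distMono_sortList_nonpos {L : List (Fin n)} (hL : ∀ i, i ∈ L)
    (F : (Fin n → Bool) → Bool) : distMono (sortList L F) ≤ 0 := by
  have hmono : Monotone (sortList L F) :=
    monotone_of_forall_monoAlong fun i => monoAlong_sortList_of_mem (hL i) F
  exact (distMono_le_relDist fun _ _ h => hmono h).trans (relDist_self _).le

end Distance

section RandomSublists

variable {α : Type*} [Fintype α] [DecidableEq α]

/-- The average of `ψ` over a uniformly random sublist of `L`; occurrences of the same element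
are kept or dropped together. -/
noncomputable def sublistAvg (ψ : List α → ℝ) (L : List α) : ℝ :=
  𝔼 b : α → Bool, ψ (L.filter b)

/-- The average of `ψ` over the lists obtained from `L` by moving the complement of a uniformly
random sublist to the end. -/
noncomputable def bipartitionAvg (ψ : List α → ℝ) (L : List α) : ℝ :=
  𝔼 b : α → Bool, ψ (L.filter b ++ L.filter bᶜ)

lemma expect_le_expect_add_const {ι : Type*} [Fintype ι] [Nonempty ι] {u v : ι → ℝ} {c : ℝ}
    (h : ∀ i, u i ≤ v i + c) : 𝔼 i, u i ≤ 𝔼 i, v i + c := by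
  rw [← Fintype.expect_const (ι := ι) c, ← expect_add_distrib]
  exact expect_le_expect fun i _ => h i

lemma sublistAvg_le_add {ψ χ : List α → ℝ} {c : ℝ} (h : ∀ L, ψ L ≤ χ L + c) (L : List α) :
    sublistAvg ψ L ≤ sublistAvg χ L + c :=
  expect_le_expect_add_const fun _ => h _

lemma bipartitionAvg_le_add {ψ χ : List α → ℝ} {c : ℝ} (h : ∀ L, ψ L ≤ χ L + c) (L : List α) :
    bipartitionAvg ψ L ≤ bipartitionAvg χ L + c :=
  expect_le_expect_add_const fun _ => h _

lemma sublistAvg_bipartitionAvg_comm (ψ : List α → ℝ) :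
    sublistAvg (bipartitionAvg ψ) = bipartitionAvg (sublistAvg ψ) := by
  funext L
  unfold sublistAvg bipartitionAvg
  rw [expect_comm]
  simp only [List.filter_append, List.filter_filter, Bool.and_comm]

lemma iterate_sublistAvg_le_iterate_bipartitionAvg {φ : List α → ℝ} {κ : ℝ}
    (h : ∀ L, sublistAvg φ L ≤ bipartitionAvg φ L + κ) (k : ℕ) (L : List α) :
    sublistAvg^[k] φ L ≤ bipartitionAvg^[k] φ L + k * κ := by
  have hB (k : ℕ) (L : List α) :
      sublistAvg (bipartitionAvg^[k] φ) L ≤ bipartitionAvg^[k + 1] φ L + κ := by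
    induction k generalizing L with
    | zero => exact h L
    | succ k ih =>
      rw [Function.iterate_succ_apply', sublistAvg_bipartitionAvg_comm,
        Function.iterate_succ_apply']
      exact bipartitionAvg_le_add ih L
  induction k generalizing L with
  | zero => simp
  | succ k ih =>
    calc sublistAvg^[k + 1] φ L = sublistAvg (sublistAvg^[k] φ) L := by
          rw [Function.iterate_succ_apply']
      _ ≤ sublistAvg (bipartitionAvg^[k] φ) L + k * κ := sublistAvg_le_add ih L
      _ ≤ bipartitionAvg^[k + 1] φ L + κ + k * κ := by gcongr; exact hB k L
      _ = bipartitionAvg^[k + 1] φ L + (k + 1 : ℕ) * κ := by push_cast; ring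

lemma iterate_bipartitionAvg_nonpos {φ : List α → ℝ}
    (h : ∀ L : List α, (∀ i, i ∈ L) → φ L ≤ 0) (k : ℕ) {L : List α} (hL : ∀ i, i ∈ L) :
    bipartitionAvg^[k] φ L ≤ 0 := by
  induction k generalizing L with
  | zero => exact h L hL
  | succ k ih =>
    rw [Function.iterate_succ_apply']
    refine expect_le univ_nonempty fun b _ => ih fun i => ?_
    cases hb : b i <;> simp [hL, hb]

lemma expect_length_filter (L : List α) :
    𝔼 b : α → Bool, ((L.filter b).length : ℝ) = L.length / 2 := by
  have hcompl : 𝔼 b : α → Bool, ((L.filter bᶜ).length : ℝ) =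
      𝔼 b : α → Bool, ((L.filter b).length : ℝ) :=
    Fintype.expect_equiv compl_involutive.toPerm _ _ fun _ => rfl
  have hsplit (b : α → Bool) : ((L.filter b).length : ℝ) + (L.filter bᶜ).length = L.length :=
    mod_cast (List.length_eq_length_filter_add b).symm
  have hsum := expect_add_distrib (univ : Finset (α → Bool))
    (fun b => ((L.filter b).length : ℝ)) fun b => ((L.filter bᶜ).length : ℝ)
  simp only [hsplit, hcompl, Fintype.expect_const] at hsum
  linarith

lemma mul_one_sub_length_div_le_iterate_sublistAvg {φ : List α → ℝ} (h : ∀ L, 0 ≤ φ L) (k : ℕ)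
    (L : List α) : φ [] * (1 - L.length / 2 ^ k) ≤ sublistAvg^[k] φ L := by
  induction k generalizing L with
  | zero =>
    cases L with
    | nil => simp
    | cons i L =>
      refine le_trans (mul_nonpos_of_nonneg_of_nonpos (h []) ?_) (h _)
      simp
  | succ k ih =>
    rw [Function.iterate_succ_apply']
    calc φ [] * (1 - L.length / 2 ^ (k + 1))
        = 𝔼 b : α → Bool, φ [] * (1 - (L.filter b).length / 2 ^ k) := by
          rw [← mul_expect, expect_sub_distrib, ← expect_div, expect_length_filter,
            Fintype.expect_const]
          ring
      _ ≤ sublistAvg (sublistAvg^[k] φ) L := expect_le_expect fun b _ => ih _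

end RandomSublists

section Directed

variable {f : (Fin n → Bool) → Bool} {M : Fin n → (Fin n → Bool) → Bool}

lemma expect_relDist_sortList_filter_le (hM : ∀ i, MonoAlong i (M i)) (L : List (Fin n)) :
    𝔼 b : Fin n → Bool, relDist (sortList (L.filter b) f) (sortList (L.filter bᶜ) f) ≤
      4 * sqrtDisagreement f M := by
  have hpoint (x : Fin n → Bool) :
      𝔼 b : Fin n → Bool, boolDist (sortList (L.filter b) f x) (sortList (L.filter bᶜ) f x) ≤
        4 * 𝔼 b : Fin n → Bool,
          √(∑ i, boolDist (sortList (L.filter b) f x) (sortList (L.filter b) (M i) x)) := by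
    refine (expect_boolDist_compl_le fun b => sortList (L.filter b) f x).trans ?_
    gcongr
    have htal := trueProb_mul_one_sub_le_expect_sqrt (fun b => sortList (L.filter b) f x)
      (fun b i => boolDist (sortList (L.filter b) f x) (sortList (L.filter b) (M i) x))
      fun b i => by
        rw [sortList_filter_flipC (hM i),
          boolDist_comm (sortList (L.filter (flipC b i)) f x) (sortList (L.filter b) (M i) x)]
        exact boolDist_triangle _ _ _
    simpa only [boolDist_sq] using htal
  calc 𝔼 b : Fin n → Bool, relDist (sortList (L.filter b) f) (sortList (L.filter bᶜ) f)
      = 𝔼 x, 𝔼 b : Fin n → Bool,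
          boolDist (sortList (L.filter b) f x) (sortList (L.filter bᶜ) f x) := expect_comm _ _ _
    _ ≤ 𝔼 x, 4 * 𝔼 b : Fin n → Bool,
          √(∑ i, boolDist (sortList (L.filter b) f x) (sortList (L.filter b) (M i) x)) :=
      expect_le_expect fun x _ => hpoint x
    _ = 4 * 𝔼 b : Fin n → Bool,
          sqrtDisagreement (sortList (L.filter b) f) fun i => sortList (L.filter b) (M i) := by
      rw [← mul_expect, expect_comm]; rfl
    _ ≤ 4 * sqrtDisagreement f M := by
      gcongr
      exact expect_le univ_nonempty fun b _ => sqrtDisagreement_sortList_le _ _ _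

lemma distMono_sortList_le_distMono_sortList_append (L L' : List (Fin n)) :
    distMono (sortList L f) ≤ distMono (sortList (L ++ L') f) +
      2 * relDist (sortList L f) (sortList L' f) := by
  have happend : relDist (sortList L' f) (sortList (L ++ L') f) ≤
      relDist (sortList L' f) (sortList L f) := by
    rw [sortList_append]
    simpa only [sortList_sortList_self] using
      relDist_sortList_le L' (sortList L' f) (sortList L f)
  rw [relDist_comm] at happend
  linarith [distMono_le_distMono_add (sortList L f) (sortList (L ++ L') f),
    relDist_triangle (sortList L f) (sortList L' f) (sortList (L ++ L') f),
    relDist_comm (sortList L' f) (sortList L f),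
    relDist_comm (sortList L' f) (sortList (L ++ L') f)]

lemma sublistAvg_distMono_sortList_le (hM : ∀ i, MonoAlong i (M i)) (L : List (Fin n)) :
    sublistAvg (fun L => distMono (sortList L f)) L ≤
      bipartitionAvg (fun L => distMono (sortList L f)) L + 8 * sqrtDisagreement f M := by
  have havg := expect_le_expect fun (b : Fin n → Bool) (_ : b ∈ univ) =>
    distMono_sortList_le_distMono_sortList_append (f := f) (L.filter b) (L.filter bᶜ)
  rw [expect_add_distrib, ← mul_expect] at havg
  unfold sublistAvg bipartitionAvg
  linarith [expect_relDist_sortList_filter_le (f := f) hM L]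

/-- Directed counterpart of `trueProb_mul_one_sub_le_expect_sqrt`: the charging of the decreasing
edges to their endpoints is encoded in the choice of the functions `M i`. -/
theorem distMono_le_mul_sqrtDisagreement (hM : ∀ i, MonoAlong i (M i)) {k : ℕ}
    (hk : 2 * n ≤ 2 ^ k) : distMono f ≤ 16 * k * sqrtDisagreement f M := by
  have hlower := mul_one_sub_length_div_le_iterate_sublistAvg
    (fun L => distMono_nonneg (sortList L f)) k (List.finRange n)
  have hupper := iterate_sublistAvg_le_iterate_bipartitionAvg
    (sublistAvg_distMono_sortList_le (f := f) hM) k (List.finRange n)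
  have hsorted := iterate_bipartitionAvg_nonpos (fun L hL => distMono_sortList_nonpos hL f) k
    List.mem_finRange
  have hhalf : (n : ℝ) / 2 ^ k ≤ 1 / 2 := by
    rw [div_le_div_iff₀ (by positivity) two_pos]
    exact_mod_cast (by omega : n * 2 ≤ 1 * 2 ^ k)
  rw [List.length_finRange] at hlower
  have hf : distMono f * (1 / 2) ≤ distMono f * (1 - n / 2 ^ k) := by
    gcongr
    · exact distMono_nonneg f
    · linarith
  have hnil : sortList [] f = f := rfl
  rw [hnil] at hlower
  linarith

end Directed

section Charging

variable (f : (Fin n → Bool) → Bool) (x : Fin n → Bool) (i : Fin n)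

lemma decEdge_update (b : Bool) : decEdge f (Function.update x i b) i ↔ decEdge f x i := by
  simp only [decEdge, Function.update_idem]

lemma decEdge_flipC : decEdge f (flipC x i) i ↔ decEdge f x i := decEdge_update f x i _

/-- The monotone modification of `f` along dimension `i`: on a decreasing edge, both values are
set to the value of `f` at the endpoint with fewer decreasing edges. -/
noncomputable def interpolant : Bool :=
  if decEdge f x i then
    if Iminus f (Function.update x i true) ≤ Iminus f (Function.update x i false) then false
    else true
  else f x

/-- The dimensions of the decreasing edges at `x` that are charged to `x`, which is the endpoint
with more decreasing edges (in case of a tie, both endpoints are charged). -/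
noncomputable def chargedDims : Finset (Fin n) :=
  univ.filter fun i => decEdge f x i ∧ Iminus f (flipC x i) ≤ Iminus f x

lemma monoAlong_interpolant : MonoAlong i fun x => interpolant f x i := by
  intro x
  simp only [interpolant, decEdge_update, Function.update_idem]
  by_cases h : decEdge f x i
  · simp only [h, if_true, le_refl]
  · simp only [h, if_false]
    intro h₀
    by_contra h₁
    exact h ⟨h₀, by simpa using h₁⟩

lemma mem_chargedDims :
    i ∈ chargedDims f x ↔ decEdge f x i ∧ Iminus f (flipC x i) ≤ Iminus f x := by
  simp [chargedDims]

lemma boolDist_interpolant_le :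
    boolDist (f x) (interpolant f x i) ≤ if i ∈ chargedDims f x then 1 else 0 := by
  simp only [interpolant, mem_chargedDims]
  by_cases h : decEdge f x i
  · have hself : Function.update x i (x i) = x := Function.update_eq_self i x
    cases hx : x i <;> rw [hx] at hself
    · have hfx : f x = true := by rw [← h.1, hself]
      simp only [h, hself, hfx, flipC, hx, Bool.not_false, if_true, true_and]
      split_ifs <;> simp [boolDist]
    · have hfx : f x = false := by rw [← h.2, hself]
      simp only [h, hself, hfx, flipC, hx, Bool.not_true, if_true, true_and]
      split_ifs with h₀ h₁ h₁
      · simp [boolDist]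
      · simp [boolDist]
      · simp [boolDist]
      · exact absurd (le_total _ _) (not_or.2 ⟨h₀, h₁⟩)
  · simp [h, boolDist_self]

lemma card_chargedDims_le_Iminus : #(chargedDims f x) ≤ Iminus f x :=
  card_le_card (monotone_filter_right _ fun _ _ h => h.1)

lemma Iminus_le : Iminus f x ≤ n :=
  (card_le_univ _).trans_eq (Fintype.card_fin n)

lemma sqrtDisagreement_interpolant_le :
    sqrtDisagreement f (fun i x => interpolant f x i) ≤ 𝔼 x, √(#(chargedDims f x) : ℝ) := by
  refine expect_le_expect fun x _ => Real.sqrt_le_sqrt ?_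
  refine (sum_le_sum fun i _ => boolDist_interpolant_le f x i).trans_eq ?_
  simp

lemma expect_Iminus : 𝔼 x, (Iminus f x : ℝ) = 2 * (numDecEdges f / 2 ^ n) := by
  have hedge (i : Fin n) : 𝔼 x : Fin n → Bool, (if decEdge f x i then (1 : ℝ) else 0) =
      2 * 𝔼 x : Fin n → Bool, if x i = false ∧ decEdge f x i then 1 else 0 := by
    rw [expect_eq_expect_update (fun x => if x i = false ∧ decEdge f x i then (1 : ℝ) else 0) i,
      mul_expect]
    refine expect_congr rfl fun x _ => ?_
    simp [decEdge_update, mul_div_cancel₀]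
  have hcount : (numDecEdges f : ℝ) / 2 ^ n =
      𝔼 x : Fin n → Bool, ∑ i, if x i = false ∧ decEdge f x i then 1 else 0 := by
    rw [numDecEdges, card_filter, Fintype.sum_prod_type, Fintype.expect_eq_sum_div_card]
    simp
  have hIminus (x : Fin n → Bool) : (Iminus f x : ℝ) = ∑ i, if decEdge f x i then 1 else 0 := by
    simp [Iminus]
  rw [hcount, expect_sum_comm, mul_sum]
  simp only [hIminus, expect_sum_comm, hedge]

lemma sq_expect_sqrt_card_chargedDims_le :
    (𝔼 x, √(#(chargedDims f x) : ℝ)) ^ 2 ≤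
      (𝔼 x, (#(chargedDims f x) : ℝ) / Iminus f x) * (2 * (numDecEdges f / 2 ^ n)) := by
  have hsplit (x : Fin n → Bool) : √((#(chargedDims f x) : ℝ) / Iminus f x) * √(Iminus f x : ℝ) =
      √(#(chargedDims f x) : ℝ) := by
    rw [← Real.sqrt_mul (by positivity), div_mul_cancel_of_imp]
    intro h
    have hle := card_chargedDims_le_Iminus f x
    rw [Nat.cast_eq_zero] at h ⊢
    omega
  have hcs := expect_mul_sq_le_sq_mul_sq univ
    (fun x => √((#(chargedDims f x) : ℝ) / Iminus f x)) fun x => √(Iminus f x : ℝ)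
  have hsq (x : Fin n → Bool) : √((#(chargedDims f x) : ℝ) / Iminus f x) ^ 2 =
      (#(chargedDims f x) : ℝ) / Iminus f x := Real.sq_sqrt (by positivity)
  simpa only [hsplit, hsq, Real.sq_sqrt (Nat.cast_nonneg _), expect_Iminus] using hcs

lemma distMono_le_mul_expect_sqrt_card_chargedDims :
    distMono f ≤ 16 * (Nat.log 2 n + 2) * 𝔼 x, √(#(chargedDims f x) : ℝ) := by
  have hk : 2 * n ≤ 2 ^ (Nat.log 2 n + 2) := by
    have hlt := Nat.lt_pow_succ_log_self one_lt_two n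
    rw [pow_succ]
    omega
  calc distMono f
      ≤ 16 * (Nat.log 2 n + 2 : ℕ) * sqrtDisagreement f (fun i x => interpolant f x i) :=
        distMono_le_mul_sqrtDisagreement (monoAlong_interpolant f) hk
    _ ≤ 16 * (Nat.log 2 n + 2) * 𝔼 x, √(#(chargedDims f x) : ℝ) := by
        push_cast
        gcongr
        exact sqrtDisagreement_interpolant_le f

end Charging

section Capture

/-- The probability of the set `S` under the distribution `S(p)`, in which each element is
included independently with probability `p`. -/
noncomputable def subsetWeight (p : ℝ) (S : Finset (Fin n)) : ℝ :=
  p ^ #S * (1 - p) ^ (n - #S)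

/-- The probability that `x` is captured by a random set drawn from `S(p)`. -/
noncomputable def captureProb (p : ℝ) (f : (Fin n → Bool) → Bool) (x : Fin n → Bool) : ℝ :=
  ∑ S with Capture f S x, subsetWeight p S

/-- The dimensions which a set containing the charged dimension `i` has to avoid in order to
capture `x` through `i`, and to capture it through no other charged dimension. -/
noncomputable def blockers (f : (Fin n → Bool) → Bool) (x : Fin n → Bool) (i : Fin n) :
    Finset (Fin n) :=
  (chargedDims f x).erase i ∪ (univ.filter fun j => decEdge f (flipC x i) j).erase i

variable {p : ℝ} (f : (Fin n → Bool) → Bool) {x : Fin n → Bool} {i : Fin n}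

lemma subsetWeight_nonneg (hp₀ : 0 ≤ p) (hp₁ : p ≤ 1) (S : Finset (Fin n)) :
    0 ≤ subsetWeight p S :=
  mul_nonneg (pow_nonneg hp₀ _) (pow_nonneg (sub_nonneg.2 hp₁) _)

lemma captureProb_nonneg (hp₀ : 0 ≤ p) (hp₁ : p ≤ 1) (x : Fin n → Bool) :
    0 ≤ captureProb p f x :=
  sum_nonneg fun S _ => subsetWeight_nonneg hp₀ hp₁ S

lemma sum_subsetWeight_of_subset_of_disjoint (p : ℝ) {A T : Finset (Fin n)} (h : Disjoint A T) :
    ∑ S with A ⊆ S ∧ Disjoint S T, subsetWeight p S = p ^ #A * (1 - p) ^ #T := by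
  have hfactor (k : Fin n) : ((if k ∉ T then p else 0) + if k ∉ A then 1 - p else 0) =
      (if k ∈ A then p else 1) * if k ∈ T then 1 - p else 1 := by
    by_cases hA : k ∈ A
    · simp [hA, disjoint_left.1 h hA]
    · by_cases hT : k ∈ T <;> simp [hA, hT]
  have hterm (S : Finset (Fin n)) :
      ((∏ k ∈ S, if k ∉ T then p else 0) * ∏ k ∈ univ \ S, if k ∉ A then 1 - p else 0) =
        if A ⊆ S ∧ Disjoint S T then subsetWeight p S else 0 := by
    have hsubset : (∀ k ∈ univ \ S, k ∉ A) ↔ A ⊆ S := by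
      simp only [mem_sdiff, mem_univ, true_and, subset_iff]
      exact forall_congr' fun k => not_imp_not
    rw [prod_ite_zero, prod_ite_zero, ite_zero_mul_ite_zero]
    simp only [hsubset, disjoint_left, prod_const, card_univ_sdiff, Fintype.card_fin, and_comm,
      subsetWeight]
  calc ∑ S with A ⊆ S ∧ Disjoint S T, subsetWeight p S
      = ∏ k : Fin n, ((if k ∉ T then p else 0) + if k ∉ A then 1 - p else 0) := by
        simp only [sum_filter, prod_add, powerset_univ, hterm]
    _ = p ^ #A * (1 - p) ^ #T := by
        simp only [hfactor, prod_mul_distrib, prod_ite_mem, univ_inter, prod_const]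

variable {f}

lemma card_blockers_le (hi : i ∈ chargedDims f x) : #(blockers f x i) ≤ 2 * (Iminus f x - 1) := by
  obtain ⟨hdec, hle⟩ := (mem_filter.1 hi).2
  have hcharged : #((chargedDims f x).erase i) ≤ Iminus f x - 1 := by
    rw [card_erase_of_mem hi]
    exact Nat.sub_le_sub_right (card_chargedDims_le_Iminus f x) 1
  have hneighbor : #((univ.filter fun j => decEdge f (flipC x i) j).erase i) ≤ Iminus f x - 1 := by
    rw [card_erase_of_mem (mem_filter.2 ⟨mem_univ i, (decEdge_flipC f x i).2 hdec⟩)]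
    exact Nat.sub_le_sub_right hle 1
  have hunion : #(blockers f x i) ≤ _ := card_union_le _ _
  omega

lemma capture_of_disjoint_blockers {S : Finset (Fin n)} (hi : i ∈ chargedDims f x) (hiS : i ∈ S)
    (hS : Disjoint S (blockers f x i)) : Capture f S x := by
  refine ⟨i, hiS, (mem_filter.1 hi).2.1, fun j hj hdec => ?_⟩
  rw [mem_sdiff, mem_singleton] at hj
  exact disjoint_left.1 hS hj.1
    (mem_union_right _ (mem_erase.2 ⟨hj.2, mem_filter.2 ⟨mem_univ j, hdec⟩⟩))

lemma card_chargedDims_mul_le_captureProb (hp₀ : 0 ≤ p) (hp₁ : p ≤ 1) :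
    #(chargedDims f x) * (p * (1 - p) ^ (2 * (Iminus f x - 1))) ≤ captureProb p f x := by
  have hdisjoint : (chargedDims f x : Set (Fin n)).PairwiseDisjoint fun i =>
      univ.filter fun S => {i} ⊆ S ∧ Disjoint S (blockers f x i) := by
    intro i _ j hj hij
    refine disjoint_filter.2 fun S _ hiS hjS => disjoint_left.1 hiS.2 ?_
      (mem_union_left _ (mem_erase.2 ⟨hij.symm, hj⟩))
    exact singleton_subset_iff.1 hjS.1
  have hnotMem (i : Fin n) : i ∉ blockers f x i := by simp [blockers]
  calc #(chargedDims f x) * (p * (1 - p) ^ (2 * (Iminus f x - 1)))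
      = ∑ i ∈ chargedDims f x, p * (1 - p) ^ (2 * (Iminus f x - 1)) := by
        rw [sum_const, nsmul_eq_mul]
    _ ≤ ∑ i ∈ chargedDims f x, p * (1 - p) ^ #(blockers f x i) := by
        refine sum_le_sum fun i hi => mul_le_mul_of_nonneg_left ?_ hp₀
        exact pow_le_pow_of_le_one (by linarith) (by linarith) (card_blockers_le hi)
    _ = ∑ i ∈ chargedDims f x,
          ∑ S with {i} ⊆ S ∧ Disjoint S (blockers f x i), subsetWeight p S := by
        refine sum_congr rfl fun i _ => ?_
        rw [sum_subsetWeight_of_subset_of_disjoint p (disjoint_singleton_left.2 (hnotMem i)),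
          card_singleton, pow_one]
    _ ≤ captureProb p f x := by
        rw [← sum_biUnion hdisjoint]
        refine sum_le_sum_of_subset_of_nonneg ?_ fun S _ _ => subsetWeight_nonneg hp₀ hp₁ S
        simp only [subset_iff, mem_biUnion, mem_filter, mem_univ, true_and]
        rintro S ⟨i, hi, hiS, hS⟩
        exact capture_of_disjoint_blockers hi (singleton_subset_iff.1 hiS) hS

end Capture

section Scale

lemma exp_neg_one_le_one_sub_one_div_pow {d : ℕ} (hd : 1 ≤ d) :
    Real.exp (-1) ≤ (1 - 1 / (d : ℝ)) ^ (d - 1) := by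
  obtain ⟨e, rfl⟩ := Nat.exists_eq_add_of_le' hd
  obtain rfl | he := e.eq_zero_or_pos
  · simp
  have he₀ : (e : ℝ) ≠ 0 := Nat.cast_ne_zero.2 he.ne'
  calc Real.exp (-1) = (Real.exp (1 / e))⁻¹ ^ e := by
        rw [← Real.exp_neg, ← Real.exp_nat_mul]
        congr 1
        field_simp
    _ ≤ (1 / e + 1 : ℝ)⁻¹ ^ e := by
        gcongr
        exact Real.add_one_le_exp _
    _ = (1 - 1 / ((e + 1 : ℕ) : ℝ)) ^ (e + 1 - 1) := by
        rw [Nat.add_sub_cancel]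
        congr 1
        push_cast
        field_simp
        ring

lemma one_div_two_pow_le_one (h : ℕ) : 1 / (2 ^ h : ℝ) ≤ 1 :=
  div_le_one_of_le₀ (one_le_pow₀ one_le_two) (by positivity)

variable (f : (Fin n → Bool) → Bool)

lemma card_chargedDims_div_Iminus_le (x : Fin n → Bool) :
    (#(chargedDims f x) : ℝ) / Iminus f x ≤
      Real.exp 4 * captureProb (1 / 2 ^ Nat.log 2 (Iminus f x)) f x := by
  set h := Nat.log 2 (Iminus f x)
  have hp₁ := one_div_two_pow_le_one h
  obtain hI | hI := (Iminus f x).eq_zero_or_pos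
  · rw [hI, Nat.cast_zero, div_zero]
    exact mul_nonneg (Real.exp_pos 4).le (captureProb_nonneg f (by positivity) hp₁ x)
  have hle : (2 ^ h : ℝ) ≤ Iminus f x := mod_cast Nat.pow_log_le_self 2 hI.ne'
  have hlt : Iminus f x < 2 ^ (h + 1) := Nat.lt_pow_succ_log_self one_lt_two _
  have havoid : Real.exp (-4) ≤ (1 - 1 / (2 ^ h : ℝ)) ^ (2 * (Iminus f x - 1)) := by
    have hexp := exp_neg_one_le_one_sub_one_div_pow (Nat.one_le_two_pow (n := h))
    push_cast at hexp
    calc Real.exp (-4) = Real.exp (-1) ^ 4 := by rw [← Real.exp_nat_mul]; norm_num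
      _ ≤ ((1 - 1 / (2 ^ h : ℝ)) ^ (2 ^ h - 1)) ^ 4 := by gcongr
      _ = (1 - 1 / (2 ^ h : ℝ)) ^ ((2 ^ h - 1) * 4) := (pow_mul _ _ _).symm
      _ ≤ (1 - 1 / (2 ^ h : ℝ)) ^ (2 * (Iminus f x - 1)) := by
        have hp₀ : (0 : ℝ) ≤ 1 / 2 ^ h := by positivity
        refine pow_le_pow_of_le_one (by linarith) (by linarith) ?_
        rw [pow_succ] at hlt
        omega
  calc (#(chargedDims f x) : ℝ) / Iminus f x ≤ #(chargedDims f x) / 2 ^ h := by gcongr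
    _ = Real.exp 4 * (#(chargedDims f x) * (1 / 2 ^ h * Real.exp (-4))) := by
        rw [Real.exp_neg]
        field_simp
    _ ≤ Real.exp 4 *
        (#(chargedDims f x) * (1 / 2 ^ h * (1 - 1 / 2 ^ h) ^ (2 * (Iminus f x - 1)))) := by gcongr
    _ ≤ Real.exp 4 * captureProb (1 / 2 ^ h) f x := by
        gcongr
        exact card_chargedDims_mul_le_captureProb (by positivity) hp₁

lemma expect_captureProb (p : ℝ) :
    𝔼 x, captureProb p f x =
      ∑ S, subsetWeight p S * ((univ.filter fun x => Capture f S x).card / 2 ^ n : ℝ) := by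
  simp only [captureProb, sum_filter, expect_sum_comm]
  refine sum_congr rfl fun S _ => ?_
  simp only [Fintype.expect_eq_sum_div_card, ← sum_filter, sum_const, nsmul_eq_mul,
    Fintype.card_pi_const, Fintype.card_bool]
  push_cast
  ring

lemma exists_scale_expect_card_div_Iminus_le :
    ∃ h ≤ Nat.log 2 n, 𝔼 x, (#(chargedDims f x) : ℝ) / Iminus f x ≤
      (Nat.log 2 n + 1) * (Real.exp 4 * 𝔼 x, captureProb (1 / 2 ^ h) f x) := by
  have hpoint (x : Fin n → Bool) : (#(chargedDims f x) : ℝ) / Iminus f x ≤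
      Real.exp 4 * ∑ h ∈ range (Nat.log 2 n + 1), captureProb (1 / 2 ^ h) f x := by
    refine (card_chargedDims_div_Iminus_le f x).trans ?_
    gcongr
    refine single_le_sum (f := fun h => captureProb (1 / 2 ^ h) f x)
      (fun h _ => captureProb_nonneg f (by positivity) (one_div_two_pow_le_one h) x)
      (mem_range_succ_iff.2 (Nat.log_mono_right (Iminus_le f x)))
  obtain ⟨h, hh, hmax⟩ := exists_max_image (range (Nat.log 2 n + 1))
    (fun h => 𝔼 x, captureProb (1 / 2 ^ h) f x) nonempty_range_add_one
  refine ⟨h, mem_range_succ_iff.1 hh, ?_⟩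
  calc 𝔼 x, (#(chargedDims f x) : ℝ) / Iminus f x
      ≤ Real.exp 4 * ∑ h ∈ range (Nat.log 2 n + 1), 𝔼 x, captureProb (1 / 2 ^ h) f x := by
        rw [← expect_sum_comm, mul_expect]
        exact expect_le_expect fun x _ => hpoint x
    _ ≤ Real.exp 4 * ((Nat.log 2 n + 1) * 𝔼 x, captureProb (1 / 2 ^ h) f x) := by
        gcongr
        simpa using sum_le_card_nsmul _ _ _ hmax
    _ = _ := by ring

theorem exists_scale_sq_distMono_le :
    ∃ h ≤ Nat.log 2 n, distMono f ^ 2 ≤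
      512 * Real.exp 4 * (Nat.log 2 n + 2) ^ 2 * (Nat.log 2 n + 1) * (numDecEdges f / 2 ^ n) *
        𝔼 x, captureProb (1 / 2 ^ h) f x := by
  obtain ⟨h, hh, hscale⟩ := exists_scale_expect_card_div_Iminus_le f
  refine ⟨h, hh, ?_⟩
  calc distMono f ^ 2
      ≤ (16 * (Nat.log 2 n + 2) * 𝔼 x, √(#(chargedDims f x) : ℝ)) ^ 2 :=
        pow_le_pow_left₀ (distMono_nonneg f) (distMono_le_mul_expect_sqrt_card_chargedDims f) 2
    _ = 256 * (Nat.log 2 n + 2) ^ 2 * (𝔼 x, √(#(chargedDims f x) : ℝ)) ^ 2 := by ring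
    _ ≤ 256 * (Nat.log 2 n + 2) ^ 2 * ((𝔼 x, (#(chargedDims f x) : ℝ) / Iminus f x) *
        (2 * (numDecEdges f / 2 ^ n))) := by
        gcongr
        exact sq_expect_sqrt_card_chargedDims_le f
    _ ≤ 256 * (Nat.log 2 n + 2) ^ 2 * ((Nat.log 2 n + 1) *
        (Real.exp 4 * 𝔼 x, captureProb (1 / 2 ^ h) f x) * (2 * (numDecEdges f / 2 ^ n))) := by
        gcongr
    _ = _ := by ring

lemma div_le_of_sq_le_mul {D ε E s l t q : ℝ} (hε : 0 < ε) (hD : ε ≤ D) (hE₀ : 0 ≤ E)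
    (hE : E ≤ ε * s) (hl : 1 ≤ l) (hlt : l ≤ t)
    (h : D ^ 2 ≤ 512 * Real.exp 4 * (l + 2) ^ 2 * (l + 1) * E * q) :
    1 / (9216 * Real.exp 4) * ε / (s * t ^ 4) ≤ q := by
  have ht : 1 ≤ t := hl.trans hlt
  have hl₀ : 0 ≤ l := zero_le_one.trans hl
  have hq : 0 < q := by
    refine pos_of_mul_pos_right (lt_of_lt_of_le ?_ h) (by positivity)
    exact pow_pos (hε.trans_le hD) 2
  have hs : 0 < s := by
    refine pos_of_mul_pos_right (lt_of_lt_of_le ?_ hE) hε.le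
    refine hE₀.lt_of_ne fun hE' => ?_
    rw [← hE', mul_zero, zero_mul] at h
    exact (pow_pos (hε.trans_le hD) 2).not_ge h
  have hmain : ε * ε ≤ ε * (9216 * Real.exp 4 * (s * t ^ 4) * q) := by
    calc ε * ε ≤ D ^ 2 := by rw [← sq]; gcongr
      _ ≤ 512 * Real.exp 4 * (l + 2) ^ 2 * (l + 1) * E * q := h
      _ ≤ 512 * Real.exp 4 * (3 * t) ^ 2 * (2 * t) * (ε * s) * q := by gcongr <;> linarith
      _ = ε * (9216 * Real.exp 4 * (s * t ^ 3) * q) := by ring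
      _ ≤ ε * (9216 * Real.exp 4 * (s * t ^ 4) * q) := by gcongr; norm_num
  rw [div_le_iff₀ (by positivity), div_mul_eq_mul_div, one_mul, div_le_iff₀ (by positivity)]
  linarith [le_of_mul_le_mul_left hmain hε]

end Scale

/-- if `dist(f, Mono) ≥ ε` and `f` has fewer than `ε·√n·2^n`
decreasing edges, then for some `d = 2^h` with `h ≤ ⌊log₂ n⌋`,
`E_{S ~ S(1/d)}[Pr_x[Capture(x,S,f)=1]] ≥ c·ε/(√n·(log₂ n)^4)`. -/
theorem stmt4 : ∃ c : ℝ, 0 < c ∧ ∀ n : ℕ, 2 ≤ n → ∀ ε : ℝ, 0 < ε →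
    ∀ f : (Fin n → Bool) → Bool, ε ≤ distMono f →
    (numDecEdges f : ℝ) < ε * Real.sqrt n * 2 ^ n →
    ∃ h : ℕ, h ≤ Nat.log 2 n ∧
      c * ε / (Real.sqrt n * (Real.logb 2 n) ^ 4) ≤
        ∑ S : Finset (Fin n),
          (1 / (2 ^ h : ℝ)) ^ S.card * (1 - 1 / (2 ^ h : ℝ)) ^ (n - S.card) *
            (((univ.filter fun x => Capture f S x).card : ℝ) / 2 ^ n) := by
  refine ⟨1 / (9216 * Real.exp 4), by positivity, fun n hn ε hε f hf hE => ?_⟩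
  obtain ⟨h, hh, hsq⟩ := exists_scale_sq_distMono_le f
  have hlog : (1 : ℝ) ≤ Nat.log 2 n := mod_cast Nat.log_pos one_lt_two hn
  have hlogb : (Nat.log 2 n : ℝ) ≤ Real.logb 2 n := mod_cast Real.natLog_le_logb n 2
  have hedges : (numDecEdges f : ℝ) / 2 ^ n ≤ ε * √n :=
    (div_le_iff₀ (by positivity)).2 hE.le
  rw [expect_captureProb] at hsq
  exact ⟨h, hh, div_le_of_sq_le_mul hε hf (by positivity) hedges hlog hlogb hsq⟩
end

section
/- For every constant κ ∈ (0, 1/2) there exist c > 0 and n₀ such that the following holds for every multiple of 4, n ≥ n₀, every M ⊆ [n] with |M| = n/2, and every P ⊆ Ψ_M with |P| = |Ψ_M|/2: every completion F of the D⁻ instance determined by (M, P) satisfies dist(F, Unate) ≥ c/√n. -/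
open Finset

attribute [local instance] Classical.propDecidable

variable {n : ℕ}

/-! A unate `g` restricts to each fibre `x_M = z` as a function monotone up to one and the same
orientation of the coordinates in `M̄`. Majority on `2k` bits has total degree-one correlation
`2k C(2k, k)` with its coordinates; at least half of it is carried either by the coordinates along
which `g` is antitone or by the others. On the former the correlation of `g` is nonpositive, on the
latter that of `¬g` is, so by Cauchy–Schwarz `g` is at constant distance from `Maj` on every fibre
in the first case, and from `¬Maj` on every fibre in the second. The erased points do not spoil
this: the layers of the `2k`-cube have size `O(4^k / √k)` and `κ < 1/2`. Hence `g` is far from `F`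
either on all fibres `z ∈ P` or on all fibres `z ∈ Ψ_M \ P`, which make up an `Ω(1/√n)` fraction of
the cube. -/

open Filter

section CentralBinomial

theorem two_mul_add_one_mul_centralBinom_sq_le (k : ℕ) :
    (2 * k + 1) * k.centralBinom ^ 2 ≤ 16 ^ k := by
  induction k with
  | zero => simp
  | succ k ih =>
    refine Nat.le_of_mul_le_mul_left (c := (k + 1) ^ 2) ?_ (by positivity)
    calc (k + 1) ^ 2 * ((2 * (k + 1) + 1) * (k + 1).centralBinom ^ 2)
        = (2 * k + 3) * ((k + 1) * (k + 1).centralBinom) ^ 2 := by ring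
      _ = 4 * (2 * k + 1) * (2 * k + 3) * ((2 * k + 1) * k.centralBinom ^ 2) := by
          rw [Nat.succ_mul_centralBinom_succ]; ring
      _ ≤ 16 * (k + 1) ^ 2 * 16 ^ k := Nat.mul_le_mul (by nlinarith) ih
      _ = (k + 1) ^ 2 * 16 ^ (k + 1) := by ring

theorem sixteen_pow_le_four_mul_mul_centralBinom_sq {k : ℕ} (hk : 1 ≤ k) :
    16 ^ k ≤ 4 * k * k.centralBinom ^ 2 := by
  induction k, hk using Nat.le_induction with
  | base => simp [Nat.centralBinom]
  | succ k _ ih =>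
    refine Nat.le_of_mul_le_mul_left (c := (k + 1) ^ 2) ?_ (by positivity)
    calc (k + 1) ^ 2 * 16 ^ (k + 1)
        = 16 * (k + 1) ^ 2 * 16 ^ k := by ring
      _ ≤ 16 * (k + 1) ^ 2 * (4 * k * k.centralBinom ^ 2) := by gcongr
      _ = 16 * (k + 1) * (4 * k * (k + 1)) * k.centralBinom ^ 2 := by ring
      _ ≤ 16 * (k + 1) * (2 * k + 1) ^ 2 * k.centralBinom ^ 2 := by gcongr; nlinarith
      _ = 4 * (k + 1) * (2 * (2 * k + 1) * k.centralBinom) ^ 2 := by ring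
      _ = (k + 1) ^ 2 * (4 * (k + 1) * (k + 1).centralBinom ^ 2) := by
          rw [← Nat.succ_mul_centralBinom_succ]; ring

theorem sqrt_mul_centralBinom_le_four_pow (k : ℕ) :
    √k * (k.centralBinom : ℝ) ≤ 4 ^ k := by
  have hsq : (k : ℝ) * (k.centralBinom : ℝ) ^ 2 ≤ 16 ^ k := by
    exact_mod_cast (Nat.mul_le_mul_right _ (by omega)).trans
      (two_mul_add_one_mul_centralBinom_sq_le k)
  refine (pow_le_pow_iff_left₀ (by positivity) (by positivity) two_ne_zero).mp ?_
  rwa [mul_pow, Real.sq_sqrt (by positivity), pow_right_comm, show (4 : ℝ) ^ 2 = 16 by norm_num]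

theorem four_pow_le_two_mul_sqrt_mul_centralBinom {k : ℕ} (hk : 1 ≤ k) :
    (4 : ℝ) ^ k ≤ 2 * √k * (k.centralBinom : ℝ) := by
  have hsq : (16 : ℝ) ^ k ≤ 4 * k * (k.centralBinom : ℝ) ^ 2 :=
    mod_cast sixteen_pow_le_four_mul_mul_centralBinom_sq hk
  refine (pow_le_pow_iff_left₀ (by positivity) (by positivity) two_ne_zero).mp ?_
  rwa [mul_pow, mul_pow, Real.sq_sqrt (by positivity), pow_right_comm,
    show (4 : ℝ) ^ 2 = 16 by norm_num, show (2 : ℝ) ^ 2 = 4 by norm_num]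

/-- Multiplied by `C(2k, j)`, the quantity `2j - 2k` is the telescoping difference
`j C(2k, j) - (j + 1) C(2k, j + 1)`, so each half of the sum collapses to `k C(2k, k)`. -/
theorem sum_range_choose_mul_abs_sub (k : ℕ) :
    ∑ j ∈ range (2 * k + 1), ((2 * k).choose j : ℝ) * |2 * (j : ℝ) - 2 * k|
      = 2 * k * k.centralBinom := by
  set a : ℕ → ℝ := fun j => j * (2 * k).choose j with ha
  have hak : a k = k * k.centralBinom := by rw [ha, Nat.centralBinom_eq_two_mul_choose]
  have hstep {j : ℕ} (hj : j ≤ 2 * k) :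
      ((2 * k).choose j : ℝ) * (2 * j - 2 * k) = a j - a (j + 1) := by
    have h : (((2 * k).choose (j + 1) * (j + 1) : ℕ) : ℝ)
        = ((2 * k).choose j * (2 * k - j) : ℕ) := by rw [Nat.choose_succ_right_eq]
    push_cast [hj] at h
    simp only [ha]
    push_cast
    linear_combination h
  have hlower : ∑ j ∈ Ico 0 k, ((2 * k).choose j : ℝ) * |2 * (j : ℝ) - 2 * k| = a k := by
    calc _ = ∑ j ∈ Ico 0 k, (a (j + 1) - a j) := by
          refine sum_congr rfl fun j hj => ?_
          have hjk : j < k := (mem_Ico.1 hj).2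
          have hjk' : (j : ℝ) ≤ k := mod_cast hjk.le
          rw [abs_of_nonpos (by linarith), mul_neg, hstep (by omega), neg_sub]
      _ = a k := by rw [sum_Ico_sub _ (Nat.zero_le k)]; simp [ha]
  have hupper : ∑ j ∈ Ico k (2 * k + 1), ((2 * k).choose j : ℝ) * |2 * (j : ℝ) - 2 * k| = a k := by
    calc _ = ∑ j ∈ Ico k (2 * k + 1), -(a (j + 1) - a j) := by
          refine sum_congr rfl fun j hj => ?_
          obtain ⟨hkj, hj2⟩ := mem_Ico.1 hj
          have hkj' : (k : ℝ) ≤ j := mod_cast hkj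
          rw [abs_of_nonneg (by linarith), hstep (by omega), neg_sub]
      _ = a k := by rw [sum_neg_distrib, sum_Ico_sub _ (by omega)]; simp [ha]
  rw [range_eq_Ico, ← sum_Ico_consecutive _ (Nat.zero_le k) (by omega), hlower, hupper, hak]
  ring

end CentralBinomial

section Hypercube

variable {ι : Type*}

/-- The `±1` encoding of a bit. -/
def boolSign (b : Bool) : ℝ := cond b 1 (-1)

theorem boolSign_not (b : Bool) : boolSign (!b) = -boolSign b := by cases b <;> simp [boolSign]

theorem boolSign_mul_self (b : Bool) : boolSign b * boolSign b = 1 := by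
  cases b <;> simp [boolSign]

theorem boolSign_monotone : Monotone boolSign := by
  rintro (_ | _) (_ | _) hab
  · rfl
  · norm_num [boolSign]
  · exact absurd hab (by decide)
  · rfl

theorem sq_boolSign_sub (a b : Bool) :
    (boolSign a - boolSign b) ^ 2 = if a ≠ b then 4 else 0 := by
  cases a <;> cases b <;> norm_num [boolSign]

/-- The linear form `∑ i ∈ T, ±1` given by the coordinates in `T`. -/
def signSum (T : Finset ι) (w : ι → Bool) : ℝ := ∑ i ∈ T, boolSign (w i)

section Weight

variable [Fintype ι]

/-- The Hamming weight of a point of the cube `{0,1}^ι`. -/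
noncomputable def weight (w : ι → Bool) : ℕ := #{i | w i = true}

theorem signSum_univ (w : ι → Bool) : signSum univ w = 2 * weight w - Fintype.card ι := by
  have hsign (b : Bool) : boolSign b = 2 * (if b = true then 1 else 0) - 1 := by
    cases b <;> norm_num [boolSign]
  simp only [signSum, hsign, sum_sub_distrib, ← mul_sum, sum_boole, weight, sum_const, card_univ,
    nsmul_eq_mul, mul_one]

/-- The strict majority function: ties go to `false`. -/
noncomputable def majority (w : ι → Bool) : Bool := decide (Fintype.card ι < 2 * weight w)

theorem boolSign_majority_mul_signSum (w : ι → Bool) :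
    boolSign (majority w) * signSum univ w = |signSum univ w| := by
  rw [signSum_univ]
  by_cases h : Fintype.card ι < 2 * weight w
  · have h' : (Fintype.card ι : ℝ) < 2 * weight w := mod_cast h
    rw [abs_of_nonneg (by linarith)]
    simp [majority, boolSign, h]
  · have h' : 2 * (weight w : ℝ) ≤ Fintype.card ι := mod_cast not_lt.1 h
    rw [abs_of_nonpos (by linarith)]
    simp [majority, boolSign, h]

end Weight

variable [DecidableEq ι]

/-- The permutation of the cube that flips coordinate `i`. -/
noncomputable def flipEquiv (i : ι) : Equiv.Perm (ι → Bool) :=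
  Function.Involutive.toPerm (fun w => Function.update w i (!w i)) fun w => by simp

theorem flipEquiv_apply (i : ι) (w : ι → Bool) :
    flipEquiv i w = Function.update w i (!w i) := rfl

/-- `g` is nondecreasing along coordinate `i`. -/
def CoordMonotone (g : (ι → Bool) → Bool) (i : ι) : Prop :=
  ∀ w, Monotone fun b => g (Function.update w i b)

/-- `g` is nonincreasing along coordinate `i`. -/
def CoordAntitone (g : (ι → Bool) → Bool) (i : ι) : Prop :=
  ∀ w, Antitone fun b => g (Function.update w i b)

theorem CoordMonotone.not {g : (ι → Bool) → Bool} {i : ι} (hg : CoordMonotone g i) :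
    CoordAntitone (fun w => !g w) i :=
  fun w _ _ hab => compl_le_compl (hg w hab)

variable [Fintype ι]

theorem sum_comp_weight {A : Type*} [AddCommMonoid A] (φ : ℕ → A) :
    ∑ w : ι → Bool, φ (weight w)
      = ∑ j ∈ range (Fintype.card ι + 1), (Fintype.card ι).choose j • φ j := by
  rw [← card_univ, ← sum_powerset_apply_card]
  exact sum_nbij' (fun w => univ.filter fun i => w i = true) (fun s i => decide (i ∈ s))
    (by simp) (by simp) (by simp) (by simp) (by simp [weight])

theorem card_weight_eq (j : ℕ) : #{w : ι → Bool | weight w = j} = (Fintype.card ι).choose j := by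
  rw [card_filter, sum_comp_weight fun i => if i = j then 1 else 0]
  simp only [smul_eq_mul, mul_ite, mul_one, mul_zero, sum_ite_eq', mem_range]
  split_ifs with hj
  · rfl
  · exact (Nat.choose_eq_zero_of_lt (by omega)).symm

theorem card_abs_weight_sub_le (c : ℝ) {K : ℝ} (hK : 0 ≤ K) :
    (#{w : ι → Bool | |(weight w : ℝ) - c| ≤ K} : ℝ)
      ≤ (2 * K + 1) * (Fintype.card ι).choose (Fintype.card ι / 2) := by
  have hmaps : ∀ w ∈ ({w | |(weight w : ℝ) - c| ≤ K} : Finset (ι → Bool)),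
      (weight w : ℤ) ∈ Icc ⌈c - K⌉ ⌊c + K⌋ := by
    intro w hw
    obtain ⟨hl, hu⟩ := abs_le.1 (mem_filter.1 hw).2
    rw [mem_Icc, Int.ceil_le, Int.le_floor, Int.cast_natCast]
    constructor <;> linarith
  have hlayer : ∀ j ∈ Icc ⌈c - K⌉ ⌊c + K⌋,
      #{w ∈ ({w | |(weight w : ℝ) - c| ≤ K} : Finset (ι → Bool)) | (weight w : ℤ) = j}
        ≤ (Fintype.card ι).choose (Fintype.card ι / 2) := by
    intro j _
    calc _ ≤ #{w : ι → Bool | weight w = j.toNat} := by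
          refine card_le_card fun w hw => ?_
          have hj := (mem_filter.1 hw).2
          exact mem_filter.2 ⟨mem_univ w, by omega⟩
      _ ≤ _ := (card_weight_eq _).trans_le (Nat.choose_le_middle _ _)
  have hcount : (#(Icc ⌈c - K⌉ ⌊c + K⌋) : ℝ) ≤ 2 * K + 1 := by
    have hcast : (#(Icc ⌈c - K⌉ ⌊c + K⌋) : ℝ) = max ((⌊c + K⌋ : ℝ) + 1 - ⌈c - K⌉) 0 := by
      rw [Int.card_Icc, ← Int.cast_natCast, Int.toNat_eq_max]
      push_cast
      rfl
    rw [hcast]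
    exact max_le (by linarith [Int.floor_le (c + K), Int.le_ceil (c - K)]) (by linarith)
  calc (#{w : ι → Bool | |(weight w : ℝ) - c| ≤ K} : ℝ)
      ≤ (Fintype.card ι).choose (Fintype.card ι / 2) * #(Icc ⌈c - K⌉ ⌊c + K⌋) :=
        mod_cast card_le_mul_card_image_of_maps_to hmaps _ hlayer
    _ ≤ (2 * K + 1) * (Fintype.card ι).choose (Fintype.card ι / 2) := by
        rw [mul_comm]; gcongr

theorem sum_boolSign_mul_boolSign {i j : ι} (hij : i ≠ j) :
    ∑ w : ι → Bool, boolSign (w i) * boolSign (w j) = 0 := by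
  have hflip := Equiv.sum_comp (flipEquiv i) fun w : ι → Bool => boolSign (w i) * boolSign (w j)
  simp only [flipEquiv_apply, Function.update_self, Function.update_of_ne hij.symm, boolSign_not,
    neg_mul, sum_neg_distrib] at hflip
  linarith

theorem sum_signSum_sq (T : Finset ι) :
    ∑ w : ι → Bool, signSum T w ^ 2 = #T * 2 ^ Fintype.card ι := by
  have hrow : ∀ i ∈ T, ∑ j ∈ T, ∑ w : ι → Bool, boolSign (w i) * boolSign (w j)
      = 2 ^ Fintype.card ι := by
    intro i hi
    rw [sum_eq_single_of_mem i hi fun j _ hj => sum_boolSign_mul_boolSign hj.symm]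
    simp [boolSign_mul_self]
  calc ∑ w : ι → Bool, signSum T w ^ 2
      = ∑ i ∈ T, ∑ j ∈ T, ∑ w : ι → Bool, boolSign (w i) * boolSign (w j) := by
        simp only [signSum, sq, sum_mul_sum]
        rw [sum_comm]
        exact sum_congr rfl fun i _ => sum_comm
    _ = #T * 2 ^ Fintype.card ι := by rw [sum_congr rfl hrow]; simp

/-- The unnormalised correlation of `f` with the linear form `signSum T`, that is `2^|ι|` times the
sum of the degree-one Fourier coefficients of `f` over `T`. -/
noncomputable def signCorr (f : (ι → Bool) → Bool) (T : Finset ι) : ℝ :=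
  ∑ w, boolSign (f w) * signSum T w

theorem signCorr_add_signCorr_compl (f : (ι → Bool) → Bool) (T : Finset ι) :
    signCorr f T + signCorr f Tᶜ = signCorr f univ := by
  simp only [signCorr, signSum, ← sum_add_distrib, ← mul_add, sum_add_sum_compl]

theorem sq_signCorr_sub_signCorr_le (f g : (ι → Bool) → Bool) (T : Finset ι) :
    (signCorr f T - signCorr g T) ^ 2
      ≤ 4 * (#{w | f w ≠ g w} : ℝ) * (#T * 2 ^ Fintype.card ι) := by
  have hdist : ∑ w, (boolSign (f w) - boolSign (g w)) ^ 2 = 4 * (#{w | f w ≠ g w} : ℝ) := by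
    simp only [sq_boolSign_sub]
    rw [← sum_filter, sum_const, nsmul_eq_mul, mul_comm]
  calc (signCorr f T - signCorr g T) ^ 2
      = (∑ w, (boolSign (f w) - boolSign (g w)) * signSum T w) ^ 2 := by
        simp only [signCorr, ← sum_sub_distrib, sub_mul]
    _ ≤ (∑ w, (boolSign (f w) - boolSign (g w)) ^ 2) * ∑ w, signSum T w ^ 2 :=
        sum_mul_sq_le_sq_mul_sq _ _ _
    _ = _ := by rw [hdist, sum_signSum_sq]

theorem CoordAntitone.sum_boolSign_mul_nonpos {g : (ι → Bool) → Bool} {i : ι}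
    (hg : CoordAntitone g i) : ∑ w, boolSign (g w) * boolSign (w i) ≤ 0 := by
  have hpair (w : ι → Bool) :
      (boolSign (g w) - boolSign (g (flipEquiv i w))) * boolSign (w i) ≤ 0 := by
    have hle := boolSign_monotone (hg w (Bool.false_le true))
    have hself : g (Function.update w i (w i)) = g w := by rw [Function.update_eq_self]
    cases hwi : w i <;> simp_all [flipEquiv_apply, boolSign]
  have hflip : ∑ w, boolSign (g (flipEquiv i w)) * boolSign (w i)
      = -∑ w, boolSign (g w) * boolSign (w i) := by
    rw [← Equiv.sum_comp (flipEquiv i) fun w => boolSign (g w) * boolSign (w i),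
      ← sum_neg_distrib]
    simp [flipEquiv_apply, boolSign_not]
  have hsum := sum_nonpos fun w (_ : w ∈ univ) => hpair w
  simp only [sub_mul, sum_sub_distrib] at hsum
  linarith

theorem signCorr_nonpos {g : (ι → Bool) → Bool} {T : Finset ι}
    (hg : ∀ i ∈ T, CoordAntitone g i) : signCorr g T ≤ 0 := by
  simp only [signCorr, signSum, mul_sum]
  rw [sum_comm]
  exact sum_nonpos fun i hi => (hg i hi).sum_boolSign_mul_nonpos

section EvenDimension

variable {k : ℕ} (hι : Fintype.card ι = 2 * k)
include hι

theorem signCorr_majority_univ :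
    signCorr (majority (ι := ι)) univ = 2 * k * k.centralBinom := by
  calc signCorr (majority (ι := ι)) univ
      = ∑ w : ι → Bool, |2 * (weight w : ℝ) - 2 * k| := by
        simp only [signCorr, boolSign_majority_mul_signSum]
        simp [signSum_univ, hι]
    _ = ∑ j ∈ range (2 * k + 1), ((2 * k).choose j : ℝ) * |2 * (j : ℝ) - 2 * k| := by
        rw [sum_comp_weight fun j => |2 * (j : ℝ) - 2 * k|, hι]
        simp only [nsmul_eq_mul]
    _ = 2 * k * k.centralBinom := sum_range_choose_mul_abs_sub k

theorem card_majority_ne_of_coordAntitone (hk : 1 ≤ k) {T : Finset ι} {g : (ι → Bool) → Bool}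
    (hT : k * k.centralBinom ≤ signCorr majority T) (hg : ∀ i ∈ T, CoordAntitone g i) :
    (4 : ℝ) ^ k / 32 ≤ #{w | majority w ≠ g w} := by
  have hbinom : (4 : ℝ) ^ k * 4 ^ k ≤ 4 * k * (k.centralBinom : ℝ) ^ 2 := by
    rw [← mul_pow, show (4 : ℝ) * 4 = 16 by norm_num]
    exact_mod_cast sixteen_pow_le_four_mul_mul_centralBinom_sq hk
  have hTcard : (#T : ℝ) ≤ 2 * k := mod_cast (card_le_univ T).trans_eq hι
  have hcube : (2 : ℝ) ^ Fintype.card ι = 4 ^ k := by rw [hι, pow_mul]; norm_num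
  have hcorr : (k * k.centralBinom : ℝ) ^ 2
      ≤ 4 * (#{w | majority w ≠ g w} : ℝ) * (2 * k * 4 ^ k) :=
    calc (k * k.centralBinom : ℝ) ^ 2
        ≤ (signCorr majority T - signCorr g T) ^ 2 := by
          gcongr
          linarith [signCorr_nonpos hg]
      _ ≤ 4 * (#{w | majority w ≠ g w} : ℝ) * (#T * 4 ^ k) :=
          hcube ▸ sq_signCorr_sub_signCorr_le _ _ _
      _ ≤ _ := by gcongr
  have hpos : (0 : ℝ) < 8 * k * 4 ^ k :=
    mul_pos (mul_pos (by norm_num) (mod_cast hk)) (by positivity)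
  refine le_of_mul_le_mul_right ?_ hpos
  calc (4 : ℝ) ^ k / 32 * (8 * k * 4 ^ k) = k / 4 * (4 ^ k * 4 ^ k) := by ring
    _ ≤ k / 4 * (4 * k * (k.centralBinom : ℝ) ^ 2) := by gcongr
    _ = (k * k.centralBinom : ℝ) ^ 2 := by ring
    _ ≤ _ := hcorr
    _ = _ := by ring

/-- Majority has large total correlation with the coordinates, and at least half of it is carried
by `T` or by `Tᶜ`. -/
theorem majority_far_or_not_majority_far (hk : 1 ≤ k) (T : Finset ι) :
    (∀ g : (ι → Bool) → Bool, (∀ i ∈ T, CoordAntitone g i) →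
      (4 : ℝ) ^ k / 32 ≤ #{w | majority w ≠ g w}) ∨
    (∀ g : (ι → Bool) → Bool, (∀ i ∉ T, CoordMonotone g i) →
      (4 : ℝ) ^ k / 32 ≤ #{w | (!majority w) ≠ g w}) := by
  have hsum := (signCorr_add_signCorr_compl majority T).trans (signCorr_majority_univ hι)
  obtain hT | hT : (k * k.centralBinom : ℝ) ≤ signCorr majority T ∨
      (k * k.centralBinom : ℝ) ≤ signCorr majority Tᶜ := by
    by_contra! h
    linarith
  · exact Or.inl fun g hg => card_majority_ne_of_coordAntitone hι hk hT hg
  · refine Or.inr fun g hg => ?_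
    have hfar := card_majority_ne_of_coordAntitone hι hk hT (g := fun w => !g w)
      fun i hi => (hg i (mem_compl.1 hi)).not
    simpa only [Bool.not_eq_not, ne_eq, Bool.not_eq_eq_eq_not] using hfar

end EvenDimension

end Hypercube

section Splice

variable {ι : Type*} [DecidableEq ι] (M : Finset ι)

/-- The point of the cube that agrees with `z` on `M` and with `w` off `M`. -/
noncomputable def splice (z : ↥M → Bool) (w : {i // i ∉ M} → Bool) : ι → Bool :=
  (Equiv.piEquivPiSubtypeProd (· ∈ M) fun _ => Bool).symm (z, w)

variable {M}

@[simp]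
theorem splice_mem (z : ↥M → Bool) (w : {i // i ∉ M} → Bool) (i : ↥M) : splice M z w i = z i := by
  simp [splice]

@[simp]
theorem splice_notMem (z : ↥M → Bool) (w : {i // i ∉ M} → Bool) (i : {i // i ∉ M}) :
    splice M z w i = w i := by
  simp [splice, i.2]

theorem splice_update (z : ↥M → Bool) (w : {i // i ∉ M} → Bool) (i : {i // i ∉ M}) (b : Bool) :
    splice M z (Function.update w i b) = Function.update (splice M z w) i b := by
  ext j
  by_cases hj : j ∈ M
  · have hji : j ≠ i := fun h => i.2 (h ▸ hj)
    rw [Function.update_of_ne hji, splice_mem _ _ ⟨j, hj⟩, splice_mem _ _ ⟨j, hj⟩]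
  · rw [splice_notMem _ _ ⟨j, hj⟩]
    obtain rfl | hji := eq_or_ne (⟨j, hj⟩ : {i // i ∉ M}) i
    · simp
    · rw [Function.update_of_ne hji, Function.update_of_ne (fun h => hji (Subtype.ext h)),
        splice_notMem _ _ ⟨j, hj⟩]

theorem CoordMonotone.comp_splice {g : (ι → Bool) → Bool} {i : {i // i ∉ M}}
    (hg : CoordMonotone g i) (z : ↥M → Bool) : CoordMonotone (fun w => g (splice M z w)) i :=
  fun w => by simpa only [splice_update] using hg (splice M z w)

theorem CoordAntitone.comp_splice {g : (ι → Bool) → Bool} {i : {i // i ∉ M}}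
    (hg : CoordAntitone g i) (z : ↥M → Bool) : CoordAntitone (fun w => g (splice M z w)) i :=
  fun w => by simpa only [splice_update] using hg (splice M z w)

theorem sum_card_splice [Fintype ι] (p : (ι → Bool) → Prop) [DecidablePred p] :
    ∑ z, #{w | p (splice M z w)} = #{x | p x} := by
  simp only [card_filter]
  rw [← Fintype.sum_prod_type' fun z w => if p (splice M z w) then 1 else 0]
  exact Equiv.sum_comp (Equiv.piEquivPiSubtypeProd (· ∈ M) fun _ => Bool).symm
    fun x => if p x then 1 else 0

end Splice

theorem eventually_two_mul_rpow_add_one_le {κ : ℝ} (hκ : κ < 1 / 2) {ε : ℝ} (hε : 0 < ε) :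
    ∀ᶠ x : ℝ in atTop, 2 * x ^ κ + 1 ≤ ε * √x := by
  have hpow : Tendsto (fun x : ℝ => 2 * x ^ (-(1 / 2 - κ)) + x ^ (-(1 / 2 : ℝ))) atTop
      (nhds 0) := by
    simpa using ((tendsto_rpow_neg_atTop (sub_pos.2 hκ)).const_mul 2).add
      (tendsto_rpow_neg_atTop one_half_pos)
  filter_upwards [hpow.eventually_le_const hε, eventually_gt_atTop 0] with x hx hx0
  calc 2 * x ^ κ + 1
      = (2 * x ^ (-(1 / 2 - κ)) + x ^ (-(1 / 2 : ℝ))) * x ^ (1 / 2 : ℝ) := by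
        rw [add_mul, mul_assoc, ← Real.rpow_add hx0, ← Real.rpow_add hx0]
        norm_num
    _ ≤ ε * √x := by rw [Real.sqrt_eq_rpow]; gcongr

theorem sqrt_eq_two_mul_sqrt_div_four (hn : 4 ∣ n) : √(n : ℝ) = 2 * √(n / 4 : ℕ) := by
  obtain ⟨k, rfl⟩ := hn
  rw [Nat.mul_div_cancel_left k four_pos, Nat.cast_mul, Real.sqrt_mul (by positivity),
    show ((4 : ℕ) : ℝ) = 2 ^ 2 by norm_num, Real.sqrt_sq zero_le_two]

theorem card_ne_le_card_ne_add {α : Type*} [Fintype α] {f f' : α → Bool} {E : Finset α}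
    (h : ∀ x ∉ E, f x = f' x) (g : α → Bool) :
    #{x | f' x ≠ g x} ≤ #{x | f x ≠ g x} + #E := by
  refine (card_le_card fun x hx => ?_).trans (card_union_le _ _)
  by_cases hxE : x ∈ E
  · exact mem_union_right _ hxE
  · exact mem_union_left _ (mem_filter.2 ⟨mem_univ x, h x hxE ▸ (mem_filter.1 hx).2⟩)

section Completion

variable {κ : ℝ} {M : Finset (Fin n)} {P : Finset (↥M → Bool)} {F g : (Fin n → Bool) → Bool}

theorem wt_splice (z : ↥M → Bool) (w : {i // i ∉ M} → Bool) : wt M (splice M z w) = weight z := by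
  rw [wt, weight, card_filter, card_filter, sum_subtype M (p := (· ∈ M)) fun _ => Iff.rfl]
  exact sum_congr rfl fun i _ => by rw [splice_mem z w i]

theorem wt_compl_splice (z : ↥M → Bool) (w : {i // i ∉ M} → Bool) :
    wt Mᶜ (splice M z w) = weight w := by
  rw [wt, weight, card_filter, card_filter, sum_subtype Mᶜ (p := (· ∉ M)) fun _ => mem_compl]
  exact sum_congr rfl fun i _ => by rw [splice_notMem z w i]

theorem coordMonotone_or_coordAntitone_of_unate (hg : unate g) (i : Fin n) :
    CoordMonotone g i ∨ CoordAntitone g i := by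
  obtain ⟨σ, hσ⟩ := hg
  have hle {x y : Fin n → Bool} (hxy : ∀ j, xor (x j) (σ j) ≤ xor (y j) (σ j)) : g x ≤ g y := by
    simpa using hσ (fun j => xor (x j) (σ j)) (fun j => xor (y j) (σ j)) hxy
  cases hi : σ i
  · refine Or.inl fun w a b hab => hle fun j => ?_
    obtain rfl | hj := eq_or_ne j i
    · simpa [hi] using hab
    · simp [hj]
  · refine Or.inr fun w a b hab => hle fun j => ?_
    obtain rfl | hj := eq_or_ne j i
    · simpa [hi] using compl_le_compl hab
    · simp [hj]

theorem le_distUnate {a : ℝ} (h : ∀ g, unate g → a * 2 ^ n ≤ #{x | F x ≠ g x}) :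
    a ≤ distUnate F := by
  refine le_csInf ⟨_, fun _ => false, ⟨fun _ => false, fun _ _ _ => le_rfl⟩, rfl⟩ ?_
  rintro _ ⟨g, hg, rfl⟩
  exact (le_div_iff₀ (by positivity)).2 (h g hg)

/-- The middle-layer part of `DminusCompletion`: the values of `F` off the layer `|x_M| = n/4` are
left free. -/
def MiddleLayerCompletion (κ : ℝ) (M : Finset (Fin n)) (P : Finset (↥M → Bool))
    (F : (Fin n → Bool) → Bool) : Prop :=
  ∀ x, wt M x = n / 4 → ¬ ErasedPt κ M x →
    F x = if (fun i : ↥M => x i.1) ∈ P then MajBar M x else !(MajBar M x)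

/-- The erased points of a fibre `x_M = z` with `|z| = n/4`, as a set of values of `x_{M̄}`. -/
noncomputable def erasedFiber (κ : ℝ) (M : Finset (Fin n)) : Finset ({i // i ∉ M} → Bool) :=
  {w | |(weight w : ℝ) - (n : ℝ) / 4| ≤ (n : ℝ) ^ κ}

theorem card_compl_subtype (hn : 4 ∣ n) (hM : #M = n / 2) :
    Fintype.card {i // i ∉ M} = 2 * (n / 4) := by
  rw [Fintype.card_subtype_compl, Fintype.card_fin, Fintype.card_coe, hM]
  omega

theorem MiddleLayerCompletion.apply_splice (hF : MiddleLayerCompletion κ M P F) (hn : 4 ∣ n)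
    (hM : #M = n / 2) {z : ↥M → Bool} (hz : z ∈ PsiSet M) {w : {i // i ∉ M} → Bool}
    (hw : w ∉ erasedFiber κ M) :
    F (splice M z w) = if z ∈ P then majority w else !majority w := by
  have hwt : wt M (splice M z w) = n / 4 := (wt_splice z w).trans (mem_filter.1 hz).2
  have herased : ¬ ErasedPt κ M (splice M z w) := fun h =>
    hw (mem_filter.2 ⟨mem_univ w, wt_compl_splice z w ▸ h.2⟩)
  have hmaj : MajBar M (splice M z w) = majority w := by
    rw [MajBar, majority, wt_compl_splice, card_compl_subtype hn hM, decide_eq_decide]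
    omega
  simpa only [splice_mem, hmaj] using hF _ hwt herased

theorem card_erasedFiber_le (hn : 4 ∣ n) (hM : #M = n / 2)
    (hκ : 2 * (n : ℝ) ^ κ + 1 ≤ 1 / 128 * √n) :
    (#(erasedFiber κ M) : ℝ) ≤ 4 ^ (n / 4) / 64 := by
  calc (#(erasedFiber κ M) : ℝ)
      ≤ (2 * (n : ℝ) ^ κ + 1) * (n / 4).centralBinom := by
        have h := card_abs_weight_sub_le (ι := {i // i ∉ M}) ((n : ℝ) / 4)
          (Real.rpow_nonneg n.cast_nonneg κ)
        rw [card_compl_subtype hn hM, Nat.mul_div_cancel_left _ two_pos,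
          ← Nat.centralBinom_eq_two_mul_choose] at h
        exact h
    _ ≤ 1 / 128 * √n * (n / 4).centralBinom := by gcongr
    _ = √(n / 4 : ℕ) * (n / 4).centralBinom / 64 := by rw [sqrt_eq_two_mul_sqrt_div_four hn]; ring
    _ ≤ 4 ^ (n / 4) / 64 := by gcongr; exact sqrt_mul_centralBinom_le_four_pow _

theorem card_PsiSet (hn : 4 ∣ n) (hM : #M = n / 2) : #(PsiSet M) = (n / 4).centralBinom := by
  rw [Nat.centralBinom_eq_two_mul_choose, ← show Fintype.card ↥M = 2 * (n / 4) by
    rw [Fintype.card_coe, hM]; omega]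
  exact card_weight_eq _

theorem card_mul_le_card_ne {Q : Finset (↥M → Bool)} {a : ℝ}
    (hQ : ∀ z ∈ Q, a ≤ #{w | F (splice M z w) ≠ g (splice M z w)}) :
    #Q * a ≤ #{x | F x ≠ g x} := by
  rw [← sum_card_splice (M := M) fun x => F x ≠ g x, Nat.cast_sum, ← nsmul_eq_mul]
  exact (card_nsmul_le_sum Q _ a hQ).trans
    (sum_le_sum_of_subset_of_nonneg (subset_univ Q) fun _ _ _ => Nat.cast_nonneg _)

theorem MiddleLayerCompletion.far_on_fibers (hF : MiddleLayerCompletion κ M P F) (hP : P ⊆ PsiSet M)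
    (hn : 4 ∣ n) (hn4 : 4 ≤ n) (hM : #M = n / 2) (hκ : 2 * (n : ℝ) ^ κ + 1 ≤ 1 / 128 * √n)
    (hg : unate g) :
    (∀ z ∈ P, (4 : ℝ) ^ (n / 4) / 64 ≤ #{w | F (splice M z w) ≠ g (splice M z w)}) ∨
    (∀ z ∈ PsiSet M \ P,
      (4 : ℝ) ^ (n / 4) / 64 ≤ #{w | F (splice M z w) ≠ g (splice M z w)}) := by
  have hfiber {z : ↥M → Bool} {f : ({i // i ∉ M} → Bool) → Bool}
      (hf : ∀ w ∉ erasedFiber κ M, F (splice M z w) = f w)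
      (hfar : (4 : ℝ) ^ (n / 4) / 32 ≤ #{w | f w ≠ g (splice M z w)}) :
      (4 : ℝ) ^ (n / 4) / 64 ≤ #{w | F (splice M z w) ≠ g (splice M z w)} := by
    have hle : (#{w | f w ≠ g (splice M z w)} : ℝ)
        ≤ #{w | F (splice M z w) ≠ g (splice M z w)} + #(erasedFiber κ M) :=
      mod_cast card_ne_le_card_ne_add hf fun w => g (splice M z w)
    linarith [card_erasedFiber_le hn hM hκ]
  obtain hfar | hfar := majority_far_or_not_majority_far (card_compl_subtype hn hM)
    (Nat.div_pos hn4 four_pos) ({i | CoordAntitone g i} : Finset {i // i ∉ M})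
  · refine Or.inl fun z hz => hfiber (fun w hw => ?_)
      (hfar _ fun i hi => (mem_filter.1 hi).2.comp_splice z)
    rw [hF.apply_splice hn hM (hP hz) hw, if_pos hz]
  · have hmono {i : {i // i ∉ M}} (hi : ¬ CoordAntitone g i) : CoordMonotone g i :=
      (coordMonotone_or_coordAntitone_of_unate hg i).resolve_right hi
    refine Or.inr fun z hz => hfiber (fun w hw => ?_)
      (hfar _ fun i hi => (hmono (by simpa using hi)).comp_splice z)
    rw [hF.apply_splice hn hM (mem_sdiff.1 hz).1 hw, if_neg (mem_sdiff.1 hz).2]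

end Completion

theorem stmt14_general {κ : ℝ} (hκ : κ < 1 / 2) :
    ∀ᶠ n : ℕ in atTop, 4 ∣ n →
    ∀ M : Finset (Fin n), #M = n / 2 →
    ∀ P ⊆ PsiSet M, ∀ δ : ℝ, 0 ≤ δ → δ * #(PsiSet M) ≤ #P → δ * #(PsiSet M) ≤ #(PsiSet M \ P) →
    ∀ F : (Fin n → Bool) → Bool, MiddleLayerCompletion κ M P F →
    δ / 64 / √n ≤ distUnate F := by
  filter_upwards [eventually_ge_atTop 4, tendsto_natCast_atTop_atTop.eventually
    (eventually_two_mul_rpow_add_one_le hκ (show (0 : ℝ) < 1 / 128 by norm_num))]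
    with n hn4 hκn hn M hM P hP δ hδ hδP hδQ F hF
  refine le_distUnate fun g hg => ?_
  obtain ⟨Q, hδQ, hQ⟩ : ∃ Q : Finset (↥M → Bool), δ * #(PsiSet M) ≤ #Q ∧ ∀ z ∈ Q,
      (4 : ℝ) ^ (n / 4) / 64 ≤ #{w | F (splice M z w) ≠ g (splice M z w)} :=
    (hF.far_on_fibers hP hn hn4 hM hκn hg).elim (fun h => ⟨P, hδP, h⟩) fun h => ⟨_, hδQ, h⟩
  have hΨ : (4 : ℝ) ^ (n / 4) / √n ≤ #(PsiSet M) := by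
    rw [card_PsiSet hn hM, div_le_iff₀' (by positivity), sqrt_eq_two_mul_sqrt_div_four hn]
    exact four_pow_le_two_mul_sqrt_mul_centralBinom (Nat.div_pos hn4 four_pos)
  have hcube : (2 : ℝ) ^ n = 4 ^ (n / 4) * 4 ^ (n / 4) := by
    rw [← mul_pow, ← Nat.mul_div_cancel' hn, pow_mul, Nat.mul_div_cancel' hn]
    norm_num
  calc δ / 64 / √n * 2 ^ n = δ * (4 ^ (n / 4) / √n) * (4 ^ (n / 4) / 64) := by rw [hcube]; ring
    _ ≤ #Q * (4 ^ (n / 4) / 64) := by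
        gcongr
        exact (mul_le_mul_of_nonneg_left hΨ hδ).trans hδQ
    _ ≤ #{x | F x ≠ g x} := card_mul_le_card_ne hQ

/-- every completion `F` of a `D⁻` instance is `Ω(1/√n)`-far
from unate. -/
theorem stmt14 : ∀ κ : ℝ, 0 < κ → κ < 1 / 2 →
    ∃ c : ℝ, 0 < c ∧ ∃ n₀ : ℕ, ∀ n : ℕ, n₀ ≤ n → 4 ∣ n →
    ∀ M : Finset (Fin n), M.card = n / 2 →
    ∀ P : Finset (↥M → Bool), P ⊆ PsiSet M → 2 * P.card = (PsiSet M).card →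
    ∀ F : (Fin n → Bool) → Bool, DminusCompletion κ M P F →
    c / Real.sqrt n ≤ distUnate F := by
  intro κ _ hκ
  obtain ⟨n₀, h⟩ := eventually_atTop.1 (stmt14_general hκ)
  refine ⟨1 / 2 / 64, by norm_num, n₀, fun n hn h4 M hM P hP hPΨ F hF =>
    h n hn h4 M hM P hP (1 / 2) (by norm_num) ?_ ?_ F hF.2.2⟩
  · rw [← hPΨ]; push_cast; linarith
  · rw [card_sdiff_of_subset hP, ← hPΨ, two_mul, Nat.add_sub_cancel]; push_cast; linarith
end
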